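/- arXiv:2212.12635 — 2 statements merged into one kernel-verified Lean document; each statement's English description precedes it below -/
import Mathlib

section
/- Let D be a squarefree positive integer with an even number of distinct prime factors (so D ≥ 6) and let N be a positive integer with gcd(D, N) = 1. Then, as real numbers, φ(D)·ψ(N)/12 − e₁(D, N)/4 − e₃(D, N)/3 > (DN/12)·(1/(e^γ·log(log(DN)) + 3/log(log 6))) − (7/3)·√(DN). -/
open scoped BigOperators

/-- The Dedekind psi function `ψ(N) = N ∏_{p ∣ N} (1 + 1/p)`, as a real number. -/
noncomputable def dedekindPsi (N : ℕ) : ℝ :=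
  N * ∏ p ∈ N.primeFactors, (1 + 1 / (p : ℝ))

/-- The Kronecker symbol `(-4|p)`: `0` at `p = 2`, and the Legendre symbol
`(-4|p)` at odd primes `p` (junk value `0` at non-primes). -/
noncomputable def chiFour (p : ℕ) : ℤ :=
  if hp : p.Prime then (if p = 2 then 0 else @legendreSym p ⟨hp⟩ (-4)) else 0

/-- The Kronecker symbol `(-3|p)`: `-1` at `p = 2`, and the Legendre symbol
`(-3|p)` at odd primes `p` (junk value `0` at non-primes). -/
noncomputable def chiThree (p : ℕ) : ℤ :=
  if hp : p.Prime then (if p = 2 then -1 else @legendreSym p ⟨hp⟩ (-3)) else 0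

/-- `e₁(D, N) = ∏_{p ∣ D} (1 - (-4|p)) ⬝ ∏_{p ∣ N} (1 + (-4|p))`, the number of
CM points of discriminant `-4` on `X₀^D(N)`. -/
noncomputable def eOne (D N : ℕ) : ℤ :=
  (∏ p ∈ D.primeFactors, (1 - chiFour p)) * ∏ p ∈ N.primeFactors, (1 + chiFour p)

/-- `e₃(D, N) = ∏_{p ∣ D} (1 - (-3|p)) ⬝ ∏_{p ∣ N} (1 + (-3|p))`, the number of
CM points of discriminant `-3` on `X₀^D(N)`. -/
noncomputable def eThree (D N : ℕ) : ℤ :=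
  (∏ p ∈ D.primeFactors, (1 - chiThree p)) * ∏ p ∈ N.primeFactors, (1 + chiThree p)

/-!
Everything reduces to `n / φ(n) ≤ e^γ log log n + 5.1` for `n ≥ 2`, since the two elliptic terms are
at most `2 ^ (ω(D) + ω(N)) ≤ (8 / 3) √(D N)` and `5.1 ≤ 3 / log log 6`. Among the integers with a
given number of prime factors, `n / φ(n)` is largest and `log n` smallest for a primorial, so it is
enough to bound the product of `(1 - 1 / p)⁻¹` over the primes `p ≤ y` by `e^γ log θ(y) + 5.1`.

For `y ≥ 2000` this is an explicit form of Mertens' third theorem. Let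
`S(m) = ∑_{d ≤ m} Λ(d) / (d log d)`. Partial summation from `∑_{d ≤ m} Λ(d) / d = log m + O(1)`
shows that `S(m) ≥ log log m + A` for `m ≥ n`, where `A` is `S(n) - log log n` up to an explicit
error. Average this over `m = ⌊e ^ j⌋` with the weights `(1 - z) z ^ j`, `z = e ^ (-δ)`: the left
side gives at most `log ζ(1 + δ)`, and the right side, in which `log j = H_j - γ + o(1)`, gives
`-log (1 - z) + A - γ + o(1)`. As `δ ζ(1 + δ) → 1`, it follows that `A ≤ γ`, an upper bound for
`S(n)`. Smaller `y` are covered by a finite computation.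
-/

section Mertens

open Finset Real
open scoped Nat ArithmeticFunction.vonMangoldt Chebyshev

lemma log_le_log_add_div_sub_one {a x : ℝ} (ha : 0 < a) (hx : 0 < x) :
    log x ≤ log a + (x / a - 1) := by
  have h := log_le_sub_one_of_pos (div_pos hx ha)
  rw [log_div hx.ne' ha.ne'] at h
  linarith

lemma mul_log_add_one_sub_le_log_factorial (n : ℕ) : n * log (n + 1) - n ≤ log n ! := by
  induction n with
  | zero => simp
  | succ n ih =>
    have hn : (0 : ℝ) < n + 1 := by positivity
    have hstep : log (n + 1 + 1) ≤ log (n + 1) + 1 / (n + 1) := by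
      have h := log_le_log_add_div_sub_one hn (by positivity : (0 : ℝ) < n + 1 + 1)
      rwa [add_div, div_self hn.ne', add_sub_cancel_left] at h
    have hmul : (n + 1) * log (n + 1 + 1) ≤ (n + 1) * log (n + 1) + (1 : ℝ) := by
      calc (n + 1) * log (n + 1 + 1) ≤ (n + 1) * (log (n + 1) + 1 / (n + 1)) := by gcongr
        _ = (n + 1) * log (n + 1) + 1 := by field_simp
    rw [Nat.factorial_succ, Nat.cast_mul, log_mul (by positivity) (by positivity)]
    push_cast
    linarith

lemma log_factorial_le_add_one_mul_log_sub {n : ℕ} (hn : 1 ≤ n) :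
    log n ! ≤ (n + 1) * log n - n + 1 := by
  induction n, hn using Nat.le_induction with
  | base => simp
  | succ n hn ih =>
    have hn0 : (0 : ℝ) < n := by exact_mod_cast hn
    have hstep : log n ≤ log (n + 1) - 1 / (n + 1) := by
      have h := log_le_log_add_div_sub_one (by positivity : (0 : ℝ) < n + 1) hn0
      have hdiv : (n : ℝ) / (n + 1) - 1 = -(1 / (n + 1)) := by field_simp; ring
      linarith
    have hmul : (n + 1) * log n ≤ (n + 1) * log (n + 1) - (1 : ℝ) := by
      calc (n + 1) * log n ≤ (n + 1) * (log (n + 1) - 1 / (n + 1)) := by gcongr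
        _ = (n + 1) * log (n + 1) - 1 := by field_simp
    rw [Nat.factorial_succ, Nat.cast_mul, log_mul (by positivity) (by positivity)]
    push_cast
    linarith

lemma sum_vonMangoldt_mul_div_eq_log_factorial (n : ℕ) :
    ∑ d ∈ Ioc 0 n, Λ d * (n / d : ℕ) = log n ! := by
  rw [← ArithmeticFunction.sum_Ioc_mul_zeta_eq_sum, ArithmeticFunction.vonMangoldt_mul_zeta]
  induction n with
  | zero => simp
  | succ n ih =>
    rw [sum_Ioc_succ_top n.zero_le, ih, ArithmeticFunction.log_apply, Nat.factorial_succ,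
      Nat.cast_mul, log_mul (by positivity) (by positivity), add_comm]

/-- The logarithmic average `∑_{d ≤ n} Λ(d) / d` of the von Mangoldt function, which Mertens'
first theorem compares with `log n`. -/
noncomputable def mangoldtSum (n : ℕ) : ℝ := ∑ d ∈ Ioc 0 n, Λ d / d

lemma mangoldtSum_succ (n : ℕ) : mangoldtSum (n + 1) = mangoldtSum n + Λ (n + 1) / (n + 1 : ℕ) :=
  sum_Ioc_succ_top n.zero_le _

lemma log_add_one_sub_one_le_mangoldtSum (n : ℕ) : log (n + 1) - 1 ≤ mangoldtSum n := by
  rcases n.eq_zero_or_pos with rfl | hn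
  · simp [mangoldtSum]
  have hfac : log n ! ≤ n * mangoldtSum n := by
    rw [← sum_vonMangoldt_mul_div_eq_log_factorial, mangoldtSum, mul_sum]
    refine sum_le_sum fun d _ => ?_
    calc Λ d * (n / d : ℕ) ≤ Λ d * (n / d) :=
          mul_le_mul_of_nonneg_left Nat.cast_div_le ArithmeticFunction.vonMangoldt_nonneg
      _ = n * (Λ d / d) := by ring
  have hn0 : (0 : ℝ) < n := by exact_mod_cast hn
  refine le_of_mul_le_mul_left ?_ hn0
  linarith [mul_log_add_one_sub_le_log_factorial n]

lemma mul_mangoldtSum_le_log_factorial_add_psi (n : ℕ) :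
    n * mangoldtSum n ≤ log n ! + ψ n := by
  rw [← sum_vonMangoldt_mul_div_eq_log_factorial, mangoldtSum, mul_sum, Chebyshev.psi,
    Nat.floor_natCast, ← sum_add_distrib]
  refine sum_le_sum fun d hd => ?_
  have hd0 : (0 : ℝ) < d := by exact_mod_cast (mem_Ioc.1 hd).1
  have hdiv : (n : ℝ) / d ≤ (n / d : ℕ) + 1 := by
    rw [div_le_iff₀ hd0, ← Nat.cast_add_one, ← Nat.cast_mul, Nat.cast_le, add_one_mul]
    exact (Nat.lt_div_mul_add (mem_Ioc.1 hd).1).le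
  calc n * (Λ d / d) = Λ d * (n / d) := by ring
    _ ≤ Λ d * ((n / d : ℕ) + 1) :=
        mul_le_mul_of_nonneg_left hdiv ArithmeticFunction.vonMangoldt_nonneg
    _ = Λ d * (n / d : ℕ) + Λ d := by ring

/-- The partial sum `∑_{d ≤ n} Λ(d) / (d log d)` of the Dirichlet series of `log ζ` at `1`; the
term `d = 1` is zero. -/
noncomputable def logZetaSum (n : ℕ) : ℝ := ∑ d ∈ Ioc 0 n, Λ d / (d * log d)

lemma logZetaSum_succ (n : ℕ) :
    logZetaSum (n + 1) = logZetaSum n + (mangoldtSum (n + 1) - mangoldtSum n) / log (n + 1) := by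
  rw [mangoldtSum_succ, add_sub_cancel_left, div_div, ← Nat.cast_add_one]
  exact sum_Ioc_succ_top n.zero_le _

-- The increments are nonnegative by Abel summation, bounding `mangoldtSum m` below by
-- `log (m + 1) - 1` and `log (log (m + 1)) - log (log m)` above by concavity.
lemma monotoneOn_abel_remainder :
    MonotoneOn (fun m : ℕ => logZetaSum m - mangoldtSum m / log m - log (log m) - 1 / log m)
      (Set.Ici 2) := by
  refine monotoneOn_of_le_succ Set.ordConnected_Ici fun m _ hm _ => ?_
  have hm2 : (2 : ℝ) ≤ m := by exact_mod_cast hm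
  have hx : 0 < log m := log_pos (by linarith)
  have hxy : log m < log (m + 1) := log_lt_log (by linarith) (by linarith)
  have hM := log_add_one_sub_one_le_mangoldtSum m
  simp only [Nat.succ_eq_succ, Nat.succ_eq_add_one, logZetaSum_succ, Nat.cast_add_one]
  set x := log m
  set y := log (m + 1)
  have hy : 0 < y := hx.trans hxy
  have hinv : 0 ≤ 1 / x - 1 / y := sub_nonneg.2 (one_div_le_one_div_of_le hx hxy.le)
  have hlog : log y ≤ log x + (y / x - 1) := log_le_log_add_div_sub_one hx hy
  have hmul : (y - 1) * (1 / x - 1 / y) ≤ mangoldtSum m * (1 / x - 1 / y) :=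
    mul_le_mul_of_nonneg_right hM hinv
  have hexp : (y - 1) * (1 / x - 1 / y) = y / x - 1 - (1 / x - 1 / y) := by field_simp
  rw [sub_div]
  linarith [(by ring : mangoldtSum m * (1 / x - 1 / y) = mangoldtSum m / x - mangoldtSum m / y)]

lemma log_log_add_one_add_le_logZetaSum {n m : ℕ} {c : ℝ} (hn : 2 ≤ n)
    (hc : mangoldtSum n ≤ log n + c) (hnm : n ≤ m) :
    log (log (m + 1)) + (logZetaSum n - log (log n) - (1 + c) / log n) ≤ logZetaSum m := by
  have hmono := monotoneOn_abel_remainder hn (hn.trans hnm) hnm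
  have hn2 : (2 : ℝ) ≤ n := by exact_mod_cast hn
  have hm2 : (2 : ℝ) ≤ m := by exact_mod_cast hn.trans hnm
  have hz : 0 < log n := log_pos (by linarith)
  have hx : 0 < log m := log_pos (by linarith)
  have hy : 0 < log (m + 1) := log_pos (by linarith)
  have hlog := log_le_log_add_div_sub_one hx hy
  have hM : (log (m + 1) - 1) / log m ≤ mangoldtSum m / log m := by
    gcongr
    exact log_add_one_sub_one_le_mangoldtSum m
  have hMn : mangoldtSum n / log n ≤ (log n + c) / log n := by gcongr
  rw [add_div, div_self hz.ne'] at hMn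
  rw [add_div]
  rw [sub_div] at hM
  simp only at hmono
  linarith

end Mertens

section EulerProduct

open Finset Real
open Nat (primesLE)
open scoped ArithmeticFunction.vonMangoldt

/-- The logarithm `∑_{p ≤ n} -log (1 - 1/p)` of the Euler product in Mertens' third theorem. -/
noncomputable def logEulerProd (n : ℕ) : ℝ := ∑ p ∈ primesLE n, -log (1 - (p : ℝ)⁻¹)

lemma sum_vonMangoldt_mul_eq_sum_primesLE (f : ℕ → ℝ) (n : ℕ) :
    ∑ d ∈ Ioc 0 n, Λ d * f d =
      ∑ p ∈ primesLE n, ∑ i ∈ range (Nat.log p n), log p * f (p ^ (i + 1)) := by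
  have hinj : Set.InjOn (fun x : (_ : ℕ) × ℕ => x.1 ^ (x.2 + 1))
      ((primesLE n).sigma fun p => range (Nat.log p n)) := by
    rintro ⟨p, i⟩ hp ⟨q, j⟩ hq h
    simp only [coe_sigma, Set.mem_sigma_iff, mem_coe] at hp hq
    obtain ⟨rfl, hij⟩ := (Nat.prime_of_mem_primesLE hp.1).pow_inj
      (Nat.prime_of_mem_primesLE hq.1) h
    exact congrArg (Sigma.mk p) hij
  calc ∑ d ∈ Ioc 0 n, Λ d * f d
      = ∑ d ∈ ((primesLE n).sigma fun p => range (Nat.log p n)).image fun x => x.1 ^ (x.2 + 1),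
          Λ d * f d := by
        refine (sum_subset (fun d hd => ?_) fun d hd hnot => ?_).symm
        · obtain ⟨⟨p, i⟩, hp, rfl⟩ := mem_image.1 hd
          rw [mem_sigma, mem_range] at hp
          have hprime := Nat.prime_of_mem_primesLE hp.1
          have hn : n ≠ 0 := by
            rintro rfl
            simp at hp
          exact mem_Ioc.2 ⟨pow_pos hprime.pos _, Nat.pow_le_of_le_log hn hp.2⟩
        · rw [mem_Ioc] at hd
          suffices ¬IsPrimePow d by
            rw [ArithmeticFunction.vonMangoldt_eq_zero_iff.2 this, zero_mul]
          intro hpow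
          obtain ⟨p, k, hp, hk, rfl⟩ := (isPrimePow_nat_iff _).1 hpow
          refine hnot (mem_image.2 ⟨⟨p, k - 1⟩, mem_sigma.2 ⟨Nat.mem_primesLE.2
            ⟨(Nat.le_self_pow hk.ne' p).trans hd.2, hp⟩, mem_range.2 ?_⟩, ?_⟩)
          · have := Nat.le_log_of_pow_le hp.one_lt hd.2
            lia
          · simp only [Nat.sub_add_cancel hk]
    _ = ∑ p ∈ primesLE n, ∑ i ∈ range (Nat.log p n), Λ (p ^ (i + 1)) * f (p ^ (i + 1)) := by
        rw [sum_image hinj, sum_sigma]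
    _ = _ := by
        refine sum_congr rfl fun p hp => sum_congr rfl fun i _ => ?_
        rw [ArithmeticFunction.vonMangoldt_apply_pow i.succ_ne_zero,
          ArithmeticFunction.vonMangoldt_apply_prime (Nat.prime_of_mem_primesLE hp)]

lemma sum_vonMangoldt_div_log_mul_rpow_eq (s : ℝ) (n : ℕ) :
    ∑ d ∈ Ioc 0 n, Λ d / log d * (d : ℝ) ^ (-s) =
      ∑ p ∈ primesLE n, ∑ i ∈ range (Nat.log p n), ((p : ℝ) ^ (-s)) ^ (i + 1) / (i + 1) := by
  simp only [div_mul_eq_mul_div, mul_div_assoc, sum_vonMangoldt_mul_eq_sum_primesLE]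
  refine sum_congr rfl fun p hp => sum_congr rfl fun i _ => ?_
  have hlog : log (p : ℝ) ≠ 0 :=
    (log_pos (by exact_mod_cast Nat.one_lt_of_mem_primesLE hp)).ne'
  rw [Nat.cast_pow, log_pow, rpow_pow_comm p.cast_nonneg]
  push_cast
  field_simp

lemma logZetaSum_eq_sum_primesLE (n : ℕ) :
    logZetaSum n = ∑ p ∈ primesLE n, ∑ i ∈ range (Nat.log p n), (p : ℝ)⁻¹ ^ (i + 1) / (i + 1) := by
  simp_rw [← rpow_neg_one, ← sum_vonMangoldt_div_log_mul_rpow_eq, logZetaSum]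
  refine sum_congr rfl fun d _ => ?_
  rw [rpow_neg_one, mul_comm (d : ℝ), ← div_div, div_eq_mul_inv _ (d : ℝ)]

lemma sum_pow_div_le_neg_log_one_sub {x : ℝ} (hx0 : 0 ≤ x) (hx1 : x < 1) (K : ℕ) :
    ∑ i ∈ range K, x ^ (i + 1) / (i + 1) ≤ -log (1 - x) :=
  sum_le_hasSum _ (fun _ _ => by positivity)
    (hasSum_pow_div_log_of_abs_lt_one (by rwa [abs_of_nonneg hx0]))

lemma neg_log_one_sub_sub_sum_pow_div_le {x : ℝ} (hx0 : 0 ≤ x) (hx1 : x < 1) (K : ℕ) :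
    -log (1 - x) - ∑ i ∈ range K, x ^ (i + 1) / (i + 1) ≤ x ^ (K + 1) / ((K + 1) * (1 - x)) := by
  have htail := (hasSum_nat_add_iff' K).2
    (hasSum_pow_div_log_of_abs_lt_one (by rwa [abs_of_nonneg hx0]))
  have hgeom := (hasSum_geometric_of_lt_one hx0 hx1).mul_left (x ^ (K + 1) / (K + 1))
  rw [← div_eq_mul_inv, div_div] at hgeom
  refine hasSum_le (fun i => ?_) htail hgeom
  calc x ^ (i + K + 1) / ((i + K : ℕ) + 1) ≤ x ^ (i + K + 1) / (K + 1) := by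
        gcongr
        exact K.le_add_left i
    _ = x ^ (K + 1) / (K + 1) * x ^ i := by ring

lemma sum_primesLE_neg_log_le_log_tsum {s : ℝ} (hs : 1 < s) (n : ℕ) :
    ∑ p ∈ primesLE n, -log (1 - (p : ℝ) ^ (-s)) ≤ log (∑' k : ℕ, 1 / (k : ℝ) ^ s) := by
  let f : ℕ →* ℝ :=
    { toFun k := (k : ℝ) ^ (-s)
      map_one' := by simp
      map_mul' a b := by rw [Nat.cast_mul, mul_rpow a.cast_nonneg b.cast_nonneg] }
  have hf : (fun k : ℕ => 1 / (k : ℝ) ^ s) = f := by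
    ext k
    exact (one_div _).trans (rpow_neg k.cast_nonneg s).symm
  have hsum : Summable f := hf ▸ summable_one_div_nat_rpow.2 hs
  have hpos : ∀ p ∈ primesLE n, 0 < 1 - f p := fun p hp =>
    sub_pos.2 (rpow_lt_one_of_one_lt_of_neg
      (by exact_mod_cast Nat.one_lt_of_mem_primesLE hp) (by linarith))
  have hle : ∏ p ∈ primesLE n, (1 - f p)⁻¹ ≤ ∑' k, f k :=
    (EulerProduct.prod_primesBelow_geometric_eq_tsum_smoothNumbers hsum (n + 1)).trans_le
      (Summable.tsum_subtype_le _ _ (fun k => rpow_nonneg k.cast_nonneg _) hsum)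
  calc ∑ p ∈ primesLE n, -log (1 - f p) = log (∏ p ∈ primesLE n, (1 - f p)⁻¹) := by
        rw [log_prod fun p hp => (inv_pos.2 (hpos p hp)).ne']
        simp only [log_inv]
    _ ≤ log (∑' k, f k) := log_le_log (prod_pos fun p hp => inv_pos.2 (hpos p hp)) hle
    _ = log (∑' k : ℕ, 1 / (k : ℝ) ^ s) := by rw [hf]

lemma sum_vonMangoldt_div_log_mul_rpow_le_log_tsum {s : ℝ} (hs : 1 < s) (n : ℕ) :
    ∑ d ∈ Ioc 0 n, Λ d / log d * (d : ℝ) ^ (-s) ≤ log (∑' k : ℕ, 1 / (k : ℝ) ^ s) := by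
  rw [sum_vonMangoldt_div_log_mul_rpow_eq]
  refine (sum_le_sum fun p hp => ?_).trans (sum_primesLE_neg_log_le_log_tsum hs n)
  exact sum_pow_div_le_neg_log_one_sub (rpow_nonneg p.cast_nonneg _)
    (rpow_lt_one_of_one_lt_of_neg (by exact_mod_cast Nat.one_lt_of_mem_primesLE hp)
      (by linarith)) _

lemma sum_Ioc_inv_mul_sub_one_le {s n : ℕ} (hs : 0 < s) (hsn : s ≤ n) :
    ∑ d ∈ Ioc s n, ((d : ℝ) * (d - 1))⁻¹ ≤ (s : ℝ)⁻¹ - (n : ℝ)⁻¹ := by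
  induction n, hsn using Nat.le_induction with
  | base => simp
  | succ n hsn ih =>
    have hn : (0 : ℝ) < n := by exact_mod_cast hs.trans_le hsn
    have hstep : ((n + 1 : ℝ) * (n + 1 - 1))⁻¹ = (n : ℝ)⁻¹ - (n + 1 : ℝ)⁻¹ := by
      rw [add_sub_cancel_right]
      field_simp
      ring
    rw [sum_Ioc_succ_top hsn, Nat.cast_add_one, hstep]
    linarith

lemma neg_log_one_sub_inv_sub_sum_le_min {n p : ℕ} (hp : p ∈ primesLE n) :
    -log (1 - (p : ℝ)⁻¹) - ∑ i ∈ range (Nat.log p n), (p : ℝ)⁻¹ ^ (i + 1) / (i + 1) ≤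
      min (n : ℝ)⁻¹ (2 * (p * (p - 1)))⁻¹ := by
  have hp2 : (2 : ℝ) ≤ p := by exact_mod_cast Nat.two_le_of_mem_primesLE hp
  have hp0 : (p : ℝ) ≠ 0 := by positivity
  have hn0 : (0 : ℝ) < n := by
    exact_mod_cast (Nat.prime_of_mem_primesLE hp).pos.trans_le (Nat.le_of_mem_primesLE hp)
  have hlog : 1 ≤ Nat.log p n :=
    Nat.log_pos (Nat.one_lt_of_mem_primesLE hp) (Nat.le_of_mem_primesLE hp)
  have hlog' : (1 : ℝ) ≤ Nat.log p n := by exact_mod_cast hlog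
  have hpow : (n : ℝ) ≤ p ^ (Nat.log p n + 1) := by
    exact_mod_cast (Nat.lt_pow_succ_log_self (Nat.one_lt_of_mem_primesLE hp) n).le
  have hinv : (2 : ℝ)⁻¹ ≤ 1 - (p : ℝ)⁻¹ := by
    have := inv_anti₀ two_pos hp2
    linarith
  refine (neg_log_one_sub_sub_sum_pow_div_le (by positivity) (by linarith) _).trans
    (le_min ?_ ?_)
  · calc (p : ℝ)⁻¹ ^ (Nat.log p n + 1) / ((Nat.log p n + 1) * (1 - (p : ℝ)⁻¹))
        ≤ (p : ℝ)⁻¹ ^ (Nat.log p n + 1) / ((1 + 1) * 2⁻¹) := by gcongr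
      _ = (p ^ (Nat.log p n + 1) : ℝ)⁻¹ := by rw [inv_pow]; norm_num
      _ ≤ (n : ℝ)⁻¹ := by gcongr
  · calc (p : ℝ)⁻¹ ^ (Nat.log p n + 1) / ((Nat.log p n + 1) * (1 - (p : ℝ)⁻¹))
        ≤ (p : ℝ)⁻¹ ^ (1 + 1) / ((1 + 1) * (1 - (p : ℝ)⁻¹)) := by
          have hp1 : (p : ℝ)⁻¹ ≤ 1 := by linarith
          have := pow_le_pow_of_le_one (by positivity) hp1 (Nat.add_le_add_right hlog 1)
          gcongr
      _ = (2 * ((p : ℝ) * (p - 1)))⁻¹ := by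
          simp only [one_add_one_eq_two]
          field_simp

lemma logEulerProd_le_logZetaSum_add {s n : ℕ} (hs : 0 < s) (hsn : s ^ 2 ≤ n) :
    logEulerProd n ≤ logZetaSum n + 3 / (2 * s) := by
  have hs0 : (0 : ℝ) < s := by exact_mod_cast hs
  have hle : s ≤ n := (Nat.le_self_pow two_ne_zero s).trans hsn
  have hterm : ∀ p ∈ primesLE n, -log (1 - (p : ℝ)⁻¹) -
      ∑ i ∈ range (Nat.log p n), (p : ℝ)⁻¹ ^ (i + 1) / (i + 1) ≤
      if p ≤ s then (n : ℝ)⁻¹ else (2 * ((p : ℝ) * (p - 1)))⁻¹ := fun p hp => by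
    have h := neg_log_one_sub_inv_sub_sum_le_min hp
    split_ifs
    exacts [h.trans (min_le_left _ _), h.trans (min_le_right _ _)]
  have hsmall : ∑ _p ∈ Ioc 0 s, (n : ℝ)⁻¹ ≤ (s : ℝ)⁻¹ := by
    rw [sum_const, Nat.card_Ioc, Nat.sub_zero, nsmul_eq_mul, ← one_div, mul_one_div,
      div_le_iff₀ (by exact_mod_cast hs.trans_le hle), ← div_eq_inv_mul, le_div_iff₀ hs0, ← sq]
    exact_mod_cast hsn
  have hlarge : ∑ p ∈ Ioc s n, (2 * ((p : ℝ) * (p - 1)))⁻¹ ≤ (2 * s : ℝ)⁻¹ := by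
    simp_rw [mul_inv (2 : ℝ), ← mul_sum]
    gcongr
    exact (sum_Ioc_inv_mul_sub_one_le hs hle).trans (sub_le_self _ (by positivity))
  have hsplit : ∑ p ∈ primesLE n, (if p ≤ s then (n : ℝ)⁻¹ else (2 * ((p : ℝ) * (p - 1)))⁻¹) ≤
      ∑ _p ∈ Ioc 0 s, (n : ℝ)⁻¹ + ∑ p ∈ Ioc s n, (2 * ((p : ℝ) * (p - 1)))⁻¹ := by
    calc _ ≤ ∑ p ∈ Ioc 0 n, (if p ≤ s then (n : ℝ)⁻¹ else (2 * ((p : ℝ) * (p - 1)))⁻¹) := by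
          refine sum_le_sum_of_subset_of_nonneg (fun p hp => mem_Ioc.2
            ⟨(Nat.prime_of_mem_primesLE hp).pos, Nat.le_of_mem_primesLE hp⟩) fun p hp _ => ?_
          have hp1 : (0 : ℝ) ≤ p - 1 := sub_nonneg.2 (by exact_mod_cast (mem_Ioc.1 hp).1)
          split_ifs <;> positivity
      _ = _ := by
          rw [← sum_Ioc_consecutive _ s.zero_le hle]
          congr 1
          · exact sum_congr rfl fun _ hp => if_pos (mem_Ioc.1 hp).2
          · exact sum_congr rfl fun _ hp => if_neg (mem_Ioc.1 hp).1.not_ge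
  rw [← sub_le_iff_le_add', logEulerProd, logZetaSum_eq_sum_primesLE, ← sum_sub_distrib]
  refine (sum_le_sum hterm).trans (hsplit.trans ?_)
  calc _ ≤ (s : ℝ)⁻¹ + (2 * s : ℝ)⁻¹ := add_le_add hsmall hlarge
    _ = 3 / (2 * s) := by field_simp; norm_num

end EulerProduct

section Tauberian

open Finset Real Filter Topology

lemma one_sub_mul_sum_pow_of_le (z : ℝ) (k m : ℕ) :
    (1 - z) * ∑ j ∈ range m, (if k ≤ j then z ^ j else 0) = z ^ k - z ^ max k m := by
  induction m with
  | zero => simp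
  | succ m ih =>
    rw [sum_range_succ, mul_add, ih]
    split_ifs with h
    · rw [max_eq_right h, max_eq_right (by lia)]
      ring
    · rw [max_eq_left (by lia), max_eq_left (by lia)]
      ring

-- The weight that the average over `j` gives to the term `d` is the geometric tail from
-- `j = ⌈log d⌉` on, which is at most `exp (-δ ⌈log d⌉) ≤ d ^ (-δ)`.
lemma one_sub_exp_neg_mul_sum_le_sum_rpow {f : ℕ → ℝ} (hf : ∀ d, 0 ≤ f d) {δ : ℝ} (hδ : 0 ≤ δ)
    (J : ℕ) :
    (1 - exp (-δ)) * ∑ j ∈ range J, exp (-δ) ^ j * ∑ d ∈ Ioc 0 ⌊exp j⌋₊, f d ≤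
      ∑ d ∈ Ioc 0 ⌊exp J⌋₊, f d * (d : ℝ) ^ (-δ) := by
  have hfilter : ∀ j ∈ range J, exp (-δ) ^ j * ∑ d ∈ Ioc 0 ⌊exp j⌋₊, f d =
      ∑ d ∈ Ioc 0 ⌊exp J⌋₊, f d * (if ⌈log d⌉₊ ≤ j then exp (-δ) ^ j else 0) := by
    intro j hj
    have hjJ : exp j ≤ exp J := exp_le_exp.2 (by exact_mod_cast (mem_range.1 hj).le)
    have hIoc : Ioc 0 ⌊exp j⌋₊ = {d ∈ Ioc 0 ⌊exp J⌋₊ | ⌈log (Nat.cast d)⌉₊ ≤ j} := by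
      ext d
      simp only [mem_filter, mem_Ioc, and_assoc]
      refine and_congr_right fun hd => ?_
      rw [Nat.le_floor_iff (exp_pos _).le, Nat.le_floor_iff (exp_pos _).le, Nat.ceil_le,
        log_le_iff_le_exp (by exact_mod_cast hd)]
      exact ⟨fun h => ⟨h.trans hjJ, h⟩, And.right⟩
    rw [hIoc, sum_filter, mul_sum]
    refine sum_congr rfl fun d _ => ?_
    split_ifs <;> ring
  rw [sum_congr rfl hfilter, sum_comm, mul_sum]
  refine sum_le_sum fun d hd => ?_
  have hd0 : (0 : ℝ) < d := by exact_mod_cast (mem_Ioc.1 hd).1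
  rw [← mul_sum, mul_left_comm, one_sub_mul_sum_pow_of_le]
  refine mul_le_mul_of_nonneg_left ?_ (hf d)
  have hceil : exp (-δ) ^ ⌈log d⌉₊ ≤ (d : ℝ) ^ (-δ) := by
    rw [← exp_nat_mul, rpow_def_of_pos hd0]
    refine exp_le_exp.2 ?_
    nlinarith [Nat.le_ceil (log d)]
  linarith [pow_pos (exp_pos (-δ)) (max ⌈log (d : ℝ)⌉₊ J)]

lemma one_sub_mul_sum_pow_mul_harmonic (z : ℝ) (J : ℕ) :
    (1 - z) * ∑ j ∈ range (J + 1), z ^ j * (harmonic j : ℝ) =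
      ∑ i ∈ range J, z ^ (i + 1) / (i + 1) - z ^ (J + 1) * (harmonic J : ℝ) := by
  induction J with
  | zero => simp
  | succ J ih =>
    rw [sum_range_succ, mul_add, ih, sum_range_succ _ J, harmonic_succ]
    push_cast
    ring

lemma harmonic_le_self (n : ℕ) : harmonic n ≤ n := by
  calc harmonic n ≤ ∑ _i ∈ range n, (1 : ℚ) :=
        sum_le_sum fun i _ => inv_le_one_of_one_le₀ (by simp)
    _ = n := by simp

lemma harmonic_nonneg (n : ℕ) : 0 ≤ harmonic n := sum_nonneg fun _ _ => by positivity

lemma hasSum_pow_mul_harmonic {z : ℝ} (hz0 : 0 ≤ z) (hz1 : z < 1) :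
    HasSum (fun j : ℕ => z ^ j * (harmonic j : ℝ)) (-log (1 - z) / (1 - z)) := by
  have hnonneg (j : ℕ) : (0 : ℝ) ≤ harmonic j := by exact_mod_cast harmonic_nonneg j
  have hlog : Tendsto (fun J => ∑ i ∈ range J, z ^ (i + 1) / ((i : ℝ) + 1)) atTop
      (𝓝 (-log (1 - z))) :=
    (hasSum_pow_div_log_of_abs_lt_one (by rwa [abs_of_nonneg hz0])).tendsto_sum_nat
  have hzero : Tendsto (fun J : ℕ => z ^ (J + 1) * (harmonic J : ℝ)) atTop (𝓝 0) := by
    refine squeeze_zero (fun J => by have := hnonneg J; positivity) (fun J => ?_)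
      (tendsto_self_mul_const_pow_of_lt_one hz0 hz1)
    rw [mul_comm]
    exact mul_le_mul (by exact_mod_cast harmonic_le_self J)
      (pow_le_pow_of_le_one hz0 hz1.le J.le_succ) (by positivity) (by positivity)
  rw [hasSum_iff_tendsto_nat_of_nonneg fun j => mul_nonneg (pow_nonneg hz0 j) (hnonneg j),
    ← tendsto_add_atTop_iff_nat 1]
  have hz : 1 - z ≠ 0 := (sub_pos.2 hz1).ne'
  have hlim := (hlog.sub hzero).div_const (1 - z)
  rw [sub_zero] at hlim
  refine hlim.congr fun J => ?_
  rw [← one_sub_mul_sum_pow_mul_harmonic, mul_div_cancel_left₀ _ hz]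

lemma exists_forall_neg_log_one_sub_le_of_eventually_harmonic_add_le {g : ℕ → ℝ} {c : ℝ}
    (hg : ∀ᶠ j : ℕ in atTop, harmonic j + c ≤ g j) :
    ∃ C, 0 ≤ C ∧ ∀ z, 0 ≤ z → z < 1 → Summable (fun j => z ^ j * g j) →
      -log (1 - z) + c - (1 - z) * C ≤ (1 - z) * ∑' j, z ^ j * g j := by
  obtain ⟨J, hJ⟩ := eventually_atTop.1 hg
  let defect (j : ℕ) : ℝ := max 0 (harmonic j + c - g j)
  refine ⟨∑ j ∈ range J, defect j, sum_nonneg fun j _ => le_max_left _ _,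
    fun z hz0 hz1 hsum => ?_⟩
  have hdefect : HasSum (fun j => z ^ j * defect j) (∑ j ∈ range J, z ^ j * defect j) := by
    refine hasSum_sum_of_ne_finset_zero fun j hj => ?_
    have hjJ : J ≤ j := not_lt.1 fun h => hj (mem_range.2 h)
    simp only [defect, max_eq_left (sub_nonpos.2 (hJ j hjJ)), mul_zero]
  have hharm := (hasSum_pow_mul_harmonic hz0 hz1).add
    ((hasSum_geometric_of_lt_one hz0 hz1).mul_right c)
  have hle := hasSum_le (fun j => ?_) hharm (hsum.hasSum.add hdefect)
  · have hdefect_le : ∑ j ∈ range J, z ^ j * defect j ≤ ∑ j ∈ range J, defect j :=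
      sum_le_sum fun j _ => mul_le_of_le_one_left (le_max_left _ _) (pow_le_one₀ hz0 hz1.le)
    have hz : 0 < 1 - z := sub_pos.2 hz1
    have hmul := mul_le_mul_of_nonneg_left
      (hle.trans (add_le_add_right hdefect_le _)) hz.le
    have hval : (1 - z) * (-log (1 - z) / (1 - z) + (1 - z)⁻¹ * c) = -log (1 - z) + c := by
      field_simp
    rw [hval, mul_add] at hmul
    linarith
  · rw [← mul_add, ← mul_add]
    refine mul_le_mul_of_nonneg_left ?_ (pow_nonneg hz0 j)
    linarith [le_max_right 0 (harmonic j + c - g j)]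

end Tauberian

section MertensConstant

open Finset Real Filter Topology
open scoped ArithmeticFunction.vonMangoldt

lemma vonMangoldt_div_mul_log_nonneg (d : ℕ) : 0 ≤ Λ d / (d * log d) :=
  div_nonneg ArithmeticFunction.vonMangoldt_nonneg
    (mul_nonneg d.cast_nonneg (log_natCast_nonneg d))

lemma one_sub_exp_neg_mul_sum_logZetaSum_le {δ : ℝ} (hδ : 0 < δ) (J : ℕ) :
    (1 - exp (-δ)) * ∑ j ∈ range J, exp (-δ) ^ j * logZetaSum ⌊exp j⌋₊ ≤
      log (∑' k : ℕ, 1 / (k : ℝ) ^ (1 + δ)) := by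
  refine (one_sub_exp_neg_mul_sum_le_sum_rpow vonMangoldt_div_mul_log_nonneg
    hδ.le J).trans ?_
  refine le_of_eq_of_le (sum_congr rfl fun d hd => ?_)
    (sum_vonMangoldt_div_log_mul_rpow_le_log_tsum (lt_add_of_pos_right 1 hδ) ⌊exp J⌋₊)
  have hd0 : (0 : ℝ) < d := by exact_mod_cast (mem_Ioc.1 hd).1
  rw [neg_add, rpow_add hd0, rpow_neg_one]
  ring

lemma eventually_harmonic_add_le_logZetaSum {n : ℕ} {A B : ℝ}
    (hA : ∀ m, n ≤ m → log (log (m + 1)) + A ≤ logZetaSum m)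
    (hB : B < A - eulerMascheroniConstant) :
    ∀ᶠ j : ℕ in atTop, harmonic j + B ≤ logZetaSum ⌊exp j⌋₊ := by
  have hharm : ∀ᶠ j : ℕ in atTop, harmonic j - log j < A - B :=
    tendsto_harmonic_sub_log.eventually_lt_const (by linarith)
  have hfloor : ∀ᶠ j : ℕ in atTop, n ≤ ⌊exp j⌋₊ :=
    (tendsto_nat_floor_atTop.comp
      (tendsto_exp_atTop.comp tendsto_natCast_atTop_atTop)).eventually_ge_atTop n
  filter_upwards [hharm, hfloor, eventually_gt_atTop 0] with j hj hn hj0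
  have hlog : log j ≤ log (log (⌊exp j⌋₊ + 1)) := by
    refine log_le_log (by exact_mod_cast hj0) ?_
    rw [le_log_iff_exp_le (by positivity)]
    exact (Nat.lt_floor_add_one _).le
  linarith [hA _ hn]

lemma exists_forall_sub_mul_le_log_mul_tsum {B : ℝ}
    (hB : ∀ᶠ j : ℕ in atTop, harmonic j + B ≤ logZetaSum ⌊exp j⌋₊) :
    ∃ C, ∀ δ : ℝ, 0 < δ → B - δ * C ≤ log (δ * ∑' k : ℕ, 1 / (k : ℝ) ^ (1 + δ)) := by
  obtain ⟨C, hC0, hC⟩ := exists_forall_neg_log_one_sub_le_of_eventually_harmonic_add_le hB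
  refine ⟨C, fun δ hδ => ?_⟩
  have hz1 : exp (-δ) < 1 := exp_lt_one_iff.2 (neg_lt_zero.2 hδ)
  have hz : 0 < 1 - exp (-δ) := sub_pos.2 hz1
  have hzδ : 1 - exp (-δ) ≤ δ := by linarith [add_one_le_exp (-δ)]
  have hnonneg : ∀ j : ℕ, 0 ≤ exp (-δ) ^ j * logZetaSum ⌊exp j⌋₊ := fun j =>
    mul_nonneg (by positivity) (sum_nonneg fun d _ => vonMangoldt_div_mul_log_nonneg d)
  have hpartial := fun J => (le_div_iff₀' hz).2 (one_sub_exp_neg_mul_sum_logZetaSum_le hδ J)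
  have htsum := (le_div_iff₀' hz).1 (Real.tsum_le_of_sum_range_le hnonneg hpartial)
  have hlower := hC _ (exp_pos _).le hz1 (summable_of_sum_range_le hnonneg hpartial)
  have hζ : 0 < ∑' k : ℕ, 1 / (k : ℝ) ^ (1 + δ) :=
    (summable_one_div_nat_rpow.2 (lt_add_of_pos_right 1 hδ)).tsum_pos
      (fun k => by positivity) 1 (by simp)
  rw [log_mul hδ.ne' hζ.ne']
  have hlog : log (1 - exp (-δ)) ≤ log δ := log_le_log hz hzδ
  have hmul : (1 - exp (-δ)) * C ≤ δ * C := by gcongr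
  linarith

lemma tendsto_log_mul_tsum_one_div_rpow :
    Tendsto (fun δ : ℝ => log (δ * ∑' k : ℕ, 1 / (k : ℝ) ^ (1 + δ))) (𝓝[>] 0) (𝓝 0) := by
  have hshift : Tendsto (fun δ : ℝ => 1 + δ) (𝓝[>] 0) (𝓝[>] 1) := by
    refine tendsto_nhdsWithin_iff.2 ⟨?_, ?_⟩
    · have := (continuous_const_add (1 : ℝ)).tendsto 0
      rw [add_zero] at this
      exact this.mono_left nhdsWithin_le_nhds
    · filter_upwards [self_mem_nhdsWithin] with δ hδ
      exact lt_add_of_pos_right 1 (Set.mem_Ioi.1 hδ)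
  have := (tendsto_sub_mul_tsum_nat_rpow.comp hshift).log one_ne_zero
  simpa using this

lemma le_eulerMascheroniConstant_of_log_log_add_le_logZetaSum {n : ℕ} {A : ℝ}
    (hA : ∀ m, n ≤ m → log (log (m + 1)) + A ≤ logZetaSum m) : A ≤ eulerMascheroniConstant := by
  refine sub_nonpos.1 (le_of_forall_lt_imp_le_of_dense fun B hB => ?_)
  obtain ⟨C, hC⟩ :=
    exists_forall_sub_mul_le_log_mul_tsum (eventually_harmonic_add_le_logZetaSum hA hB)
  have hleft : Tendsto (fun δ : ℝ => B - δ * C) (𝓝[>] 0) (𝓝 B) := by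
    have := (by fun_prop : Continuous fun δ : ℝ => B - δ * C).tendsto 0
    rw [zero_mul, sub_zero] at this
    exact this.mono_left nhdsWithin_le_nhds
  refine le_of_tendsto_of_tendsto hleft tendsto_log_mul_tsum_one_div_rpow ?_
  filter_upwards [self_mem_nhdsWithin] with δ hδ using hC δ hδ

lemma logZetaSum_le {n : ℕ} {c : ℝ} (hn : 2 ≤ n) (hc : mangoldtSum n ≤ log n + c) :
    logZetaSum n ≤ eulerMascheroniConstant + log (log n) + (1 + c) / log n := by
  linarith [le_eulerMascheroniConstant_of_log_log_add_le_logZetaSum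
    fun m hnm => log_log_add_one_add_le_logZetaSum hn hc hnm]

end MertensConstant

section Chebyshev

open Finset Real
open Nat (primesLE)
open scoped Nat.Prime Chebyshev

lemma psi_le_theta_add_primeCounting_sqrt_mul_log (n : ℕ) :
    ψ n ≤ θ n + π (Nat.sqrt n) * log n := by
  have hsub : primesLE (Nat.sqrt n) = {p ∈ primesLE n | p ≤ Nat.sqrt n} := by
    ext p
    simp only [mem_filter, Nat.mem_primesLE]
    exact ⟨fun h => ⟨⟨h.1.trans n.sqrt_le_self, h.2⟩, h.1⟩, fun h => ⟨h.2, h.1.2⟩⟩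
  rw [Chebyshev.psi_eq_sum_mul_log_prime, Chebyshev.theta_eq_sum_primesLE_log,
    ← Nat.primesLE_card_eq_primeCounting, hsub, ← nsmul_eq_mul, ← sum_const, sum_filter,
    ← sum_add_distrib]
  refine sum_le_sum fun p hp => ?_
  have hp0 : 0 < p := (Nat.prime_of_mem_primesLE hp).pos
  have hn0 : n ≠ 0 := (hp0.trans_le (Nat.le_of_mem_primesLE hp)).ne'
  have hlogp : 0 ≤ log (p : ℝ) := log_natCast_nonneg p
  split_ifs with hle
  · have hpow : log ((p : ℝ) ^ Nat.log p n) ≤ log n :=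
      log_le_log (by positivity) (by exact_mod_cast Nat.pow_log_le_self p hn0)
    rw [log_pow] at hpow
    linarith
  · have hlt : Nat.log p n < 2 :=
      Nat.log_lt_of_lt_pow hn0 (Nat.sqrt_lt'.1 (not_le.1 hle))
    rw [add_zero]
    exact mul_le_of_le_one_left hlogp (by exact_mod_cast Nat.le_of_lt_succ hlt)

lemma primeCounting_le_half_add_one (n : ℕ) : (π n : ℝ) ≤ n / 2 + 1 := by
  have hnat : π n ≤ n / 2 + 1 := by
    rcases lt_or_ge n 2 with hn | hn
    · interval_cases n <;> simp
    · obtain ⟨k, rfl⟩ := Nat.exists_eq_add_of_le hn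
      have := Nat.primeCounting_add_le two_ne_zero le_rfl k
      rw [(by decide : π 2 = 1), Nat.totient_two] at this
      lia
  calc (π n : ℝ) ≤ (n / 2 : ℕ) + 1 := by exact_mod_cast hnat
    _ ≤ n / 2 + 1 := by
      gcongr
      exact Nat.cast_div_le

lemma log_le_sqrt_div_five {n : ℕ} (hn : 2000 ≤ n) : log n ≤ (Nat.sqrt n : ℝ) / 5 := by
  have hs : (44 : ℝ) ≤ Nat.sqrt n := by exact_mod_cast Nat.le_sqrt.2 (by lia : 44 * 44 ≤ n)
  have hsq : (n : ℝ) ≤ (Nat.sqrt n + 1) ^ 2 := by exact_mod_cast (Nat.lt_succ_sqrt' n).le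
  have htangent := log_le_log_add_div_sub_one (by norm_num : (0 : ℝ) < 2 ^ 6)
    (by linarith : (0 : ℝ) < Nat.sqrt n + 1)
  rw [log_pow] at htangent
  calc log n ≤ log ((Nat.sqrt n + 1 : ℝ) ^ 2) := log_le_log (by norm_cast; lia) hsq
    _ = 2 * log (Nat.sqrt n + 1) := by rw [log_pow, Nat.cast_two]
    _ ≤ (Nat.sqrt n : ℝ) / 5 := by
      push_cast at htangent
      linarith [log_two_lt_d9]

lemma log_le_mul_self {n : ℕ} (hn : 2000 ≤ n) : log n ≤ 0.005 * n := by
  have hs : 44 ≤ Nat.sqrt n := Nat.le_sqrt.2 (by lia)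
  have hsn : (44 * Nat.sqrt n : ℝ) ≤ n := by
    exact_mod_cast (Nat.mul_le_mul_right _ hs).trans n.sqrt_le
  linarith [log_le_sqrt_div_five hn]

lemma psi_le_theta_add_mul {n : ℕ} (hn : 2000 ≤ n) : ψ n ≤ θ n + 0.105 * n := by
  have hsn : (Nat.sqrt n : ℝ) ^ 2 ≤ n := by exact_mod_cast n.sqrt_le'
  have hs : (44 : ℝ) ≤ Nat.sqrt n := by exact_mod_cast Nat.le_sqrt.2 (by lia : 44 * 44 ≤ n)
  have hmul : π (Nat.sqrt n) * log n ≤ ((Nat.sqrt n : ℝ) / 2 + 1) * ((Nat.sqrt n : ℝ) / 5) :=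
    mul_le_mul (primeCounting_le_half_add_one _) (log_le_sqrt_div_five hn)
      (log_natCast_nonneg n) (by positivity)
  nlinarith [psi_le_theta_add_primeCounting_sqrt_mul_log n]

lemma mul_le_theta {n : ℕ} (hn : 2000 ≤ n) : 0.58 * n ≤ θ n := by
  have hn0 : (2000 : ℝ) ≤ n := by exact_mod_cast hn
  have hlog := log_le_log_add_div_sub_one (by linarith : (0 : ℝ) < n)
    (by linarith : 0 < n + (1 : ℝ))
  rw [add_div, div_self (by linarith), add_sub_cancel_left] at hlog
  have hinv : 1 / (n : ℝ) ≤ 1 := (div_le_one (by linarith)).2 (by linarith)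
  have hlog2 : 0.693 * (n : ℝ) ≤ n * log 2 := by nlinarith [log_two_gt_d9]
  linarith [Chebyshev.psi_ge n, psi_le_theta_add_mul hn, log_le_mul_self hn]

lemma mangoldtSum_le {n : ℕ} (hn : 2000 ≤ n) : mangoldtSum n ≤ log n + 1 / 2 := by
  have hn0 : (2000 : ℝ) ≤ n := by exact_mod_cast hn
  have hθ : θ n ≤ 1.3863 * n := by
    have hlog4 : log 4 = 2 * log 2 := by
      rw [← log_rpow two_pos]
      norm_num
    refine (Chebyshev.theta_le_log4_mul_x n.cast_nonneg).trans ?_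
    gcongr
    linarith [log_two_lt_d9]
  have hfac := log_factorial_le_add_one_mul_log_sub (by lia : 1 ≤ n)
  have hM := mul_mangoldtSum_le_log_factorial_add_psi n
  refine le_of_mul_le_mul_left ?_ (by linarith : (0 : ℝ) < n)
  linarith [psi_le_theta_add_mul hn, log_le_mul_self hn]

end Chebyshev

section MertensProduct

open Finset Real
open Nat (primesLE)
open scoped Chebyshev

lemma mul_log_le_mul_log_of_pow_le_pow {a b k m : ℕ} (ha : 0 < a) (h : a ^ m ≤ b ^ k) :
    m * log a ≤ k * log b := by
  rw [← log_pow, ← log_pow]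
  exact log_le_log (by positivity) (by exact_mod_cast h)

lemma le_exp_eulerMascheroniConstant : 1.648 ≤ exp eulerMascheroniConstant := by
  refine le_trans ?_ (exp_le_exp.2 one_half_lt_eulerMascheroniConstant.le)
  rw [← pow_le_pow_iff_left₀ (by norm_num) (exp_pos _).le two_ne_zero, ← exp_nat_mul]
  norm_num
  linarith [exp_one_gt_d9]

lemma exp_eulerMascheroniConstant_le : exp eulerMascheroniConstant ≤ 1.948 := by
  refine (exp_le_exp.2 eulerMascheroniConstant_lt_two_thirds.le).trans ?_
  rw [← pow_le_pow_iff_left₀ (exp_pos _).le (by norm_num) three_ne_zero, ← exp_nat_mul]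
  calc exp ((3 : ℕ) * (2 / 3)) = exp 1 ^ 2 := by
        rw [← exp_nat_mul]
        norm_num
    _ ≤ 2.7182818286 ^ 2 := by gcongr; exact exp_one_lt_d9.le
    _ ≤ 1.948 ^ 3 := by norm_num

lemma logEulerProd_le {n : ℕ} (hn : 2000 ≤ n) :
    logEulerProd n ≤ eulerMascheroniConstant + log (log n) + 1.8 / log n := by
  have hs : 44 ≤ Nat.sqrt n := Nat.le_sqrt.2 (by lia)
  have hs0 : (0 : ℝ) < Nat.sqrt n := by exact_mod_cast hs.trans_lt' (by norm_num)
  have hlog : 0 < log (n : ℝ) := log_pos (by exact_mod_cast (by lia : 1 < n))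
  have hprod := logEulerProd_le_logZetaSum_add (by lia) n.sqrt_le'
  have hzeta := logZetaSum_le (by lia) (mangoldtSum_le hn)
  have herr : 3 / (2 * Nat.sqrt n : ℝ) ≤ 0.3 / log n := by
    rw [div_le_div_iff₀ (mul_pos two_pos hs0) hlog]
    linarith [log_le_sqrt_div_five hn]
  have hadd : (1 + 1 / 2) / log n + 0.3 / log n = 1.8 / log (n : ℝ) := by
    rw [← add_div]
    norm_num
  linarith

lemma exp_le_one_add_add_mul_sq {u : ℝ} (hu0 : 0 ≤ u) (hu : u ≤ 0.24) :
    exp u ≤ 1 + u + 0.56 * u ^ 2 := by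
  have h := exp_bound' hu0 (by linarith) (n := 3) (by norm_num)
  norm_num [sum_range_succ, Nat.factorial] at h
  nlinarith [sq_nonneg u]

lemma mul_exp_div_le {x : ℝ} (hx : 7.55 ≤ x) : x * exp (1.8 / x) ≤ x + 2.05 := by
  have hx0 : 0 < x := by linarith
  have hu : 1.8 / x ≤ 0.24 := by
    rw [div_le_iff₀ hx0]
    linarith
  have hexp := exp_le_one_add_add_mul_sq (by positivity) hu
  calc x * exp (1.8 / x) ≤ x * (1 + 1.8 / x + 0.56 * (1.8 / x) ^ 2) := by gcongr
    _ = x + 1.8 * (1 + 0.56 * (1.8 / x)) := by field_simp; ring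
    _ ≤ x + 2.05 := by linarith

lemma log_sub_le_log_theta {n : ℕ} (hn : 2000 ≤ n) : log n - 0.55 ≤ log (θ n) := by
  have hn0 : (0 : ℝ) < n := by exact_mod_cast (by lia : 0 < n)
  have hexp : exp (-0.55) ≤ 0.58 := by
    rw [exp_neg, inv_le_comm₀ (exp_pos _) (by norm_num)]
    have h := sum_le_exp_of_nonneg (by norm_num : (0 : ℝ) ≤ 0.55) 4
    norm_num [sum_range_succ, Nat.factorial] at h ⊢
    linarith
  have hlog : -0.55 ≤ log 0.58 := (le_log_iff_exp_le (by norm_num)).2 hexp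
  calc log n - 0.55 ≤ log (0.58 * n) := by
        rw [log_mul (by norm_num) hn0.ne']
        linarith
    _ ≤ log (θ n) := log_le_log (by positivity) (mul_le_theta hn)

lemma exp_logEulerProd_le_of_two_thousand_le {n : ℕ} (hn : 2000 ≤ n) :
    exp (logEulerProd n) ≤ exp eulerMascheroniConstant * log (θ n) + 5.1 := by
  have hlog : 7.55 ≤ log (n : ℝ) := by
    have h := mul_log_le_mul_log_of_pow_le_pow two_pos (by norm_num : 2 ^ 109 ≤ 2000 ^ 10)
    have hle : log (2000 : ℝ) ≤ log n := log_le_log (by norm_num) (by exact_mod_cast hn)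
    push_cast at h
    linarith [log_two_gt_d9]
  calc exp (logEulerProd n)
      ≤ exp (eulerMascheroniConstant + log (log n) + 1.8 / log n) :=
        exp_le_exp.2 (logEulerProd_le hn)
    _ = exp eulerMascheroniConstant * (log n * exp (1.8 / log n)) := by
        rw [exp_add, exp_add, exp_log (by linarith), mul_assoc]
    _ ≤ exp eulerMascheroniConstant * (log (θ n) + 2.6) := by
        gcongr
        linarith [mul_exp_div_le hlog, log_sub_le_log_theta hn]
    _ ≤ exp eulerMascheroniConstant * log (θ n) + 5.1 := by
        linarith [exp_eulerMascheroniConstant_le]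

lemma neg_log_one_sub_inv_nonneg {p : ℕ} (hp : 2 ≤ p) : 0 ≤ -log (1 - (p : ℝ)⁻¹) := by
  have hinv : (p : ℝ)⁻¹ ≤ 2⁻¹ := inv_anti₀ two_pos (by exact_mod_cast hp)
  have hpos : 0 < (p : ℝ)⁻¹ := by positivity
  exact neg_nonneg.2 (log_nonpos (by linarith) (by linarith))

lemma logEulerProd_mono : Monotone logEulerProd := fun _ _ h =>
  sum_le_sum_of_subset_of_nonneg (Nat.primesLE_mono h) fun _ hp _ =>
    neg_log_one_sub_inv_nonneg (Nat.two_le_of_mem_primesLE hp)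

lemma exp_sum_neg_log_one_sub_inv {T : Finset ℕ} (hT : ∀ p ∈ T, 2 ≤ p) :
    exp (∑ p ∈ T, -log (1 - (p : ℝ)⁻¹)) = (∏ p ∈ T, p : ℕ) / (∏ p ∈ T, (p - 1) : ℕ) := by
  rw [exp_sum, Nat.cast_prod, Nat.cast_prod, ← prod_div_distrib]
  refine prod_congr rfl fun p hp => ?_
  have hp2 : (2 : ℝ) ≤ p := by exact_mod_cast hT p hp
  have hp0 : (p : ℝ) ≠ 0 := by positivity
  have hp1 : (p : ℝ) - 1 ≠ 0 := by linarith
  have hinv : (p : ℝ)⁻¹ < 1 := inv_lt_one_of_one_lt₀ (by linarith)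
  rw [exp_neg, exp_log (sub_pos.2 hinv), Nat.cast_pred (hT p hp |>.trans_lt' one_lt_two |>.le)]
  field_simp

lemma exp_sum_neg_log_one_sub_inv_le {T : Finset ℕ} {a b : ℕ} (hT : ∀ p ∈ T, 2 ≤ p) (hb : 0 < b)
    (h : (∏ p ∈ T, p) * b ≤ a * ∏ p ∈ T, (p - 1)) :
    exp (∑ p ∈ T, -log (1 - (p : ℝ)⁻¹)) ≤ a / b := by
  have hprod : 0 < ∏ p ∈ T, (p - 1) := prod_pos fun p hp => Nat.sub_pos_of_lt (hT p hp)
  rw [exp_sum_neg_log_one_sub_inv hT,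
    div_le_div_iff₀ (by exact_mod_cast hprod) (by exact_mod_cast hb)]
  exact_mod_cast h

-- Sieving by a primorial stands in for primality tests up to `b`, which are too slow to evaluate in
-- the kernel; the surviving composite numbers only enlarge the right-hand side.
lemma logEulerProd_le_add_sum_coprime_primorial {a b c : ℕ} (hca : c ≤ a) (ha : 0 < a) :
    logEulerProd b ≤ logEulerProd a +
      ∑ m ∈ Ioc a b with m.Coprime (primorial c), -log (1 - (m : ℝ)⁻¹) := by
  have hdisj : Disjoint (primesLE a) {m ∈ Ioc a b | m.Coprime (primorial c)} :=
    disjoint_left.2 fun p hp hp' =>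
      (mem_Ioc.1 (mem_filter.1 hp').1).1.not_ge (Nat.le_of_mem_primesLE hp)
  rw [logEulerProd, logEulerProd, ← sum_union hdisj]
  refine sum_le_sum_of_subset_of_nonneg (fun p hp => ?_) fun m hm _ => ?_
  · obtain ⟨hpb, hprime⟩ := Nat.mem_primesLE.1 hp
    rcases le_or_gt p a with hpa | hpa
    · exact mem_union_left _ (Nat.mem_primesLE.2 ⟨hpa, hprime⟩)
    · refine mem_union_right _ (mem_filter.2 ⟨mem_Ioc.2 ⟨hpa, hpb⟩, ?_⟩)
      exact hprime.coprime_iff_not_dvd.2 fun hdvd =>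
        hpa.not_ge ((hprime.dvd_primorial_iff.1 hdvd).trans hca)
  · rcases mem_union.1 hm with hm | hm
    · exact neg_log_one_sub_inv_nonneg (Nat.two_le_of_mem_primesLE hm)
    · exact neg_log_one_sub_inv_nonneg (by have := mem_Ioc.1 (mem_filter.1 hm).1; lia)

-- Both sides are monotone in `y`, so on `[a, b]` the left-hand side may be evaluated at `b` and the
-- right-hand side at `a`; `m` and `k / 2` are lower bounds for the binary logarithms of the
-- primorial of `a` and of `θ a`.
lemma exp_logEulerProd_le_of_two_pow_le_primorial {a b k m y : ℕ} {C : ℝ}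
    (hm : 2 ^ m ≤ primorial a) (hk : (2 : ℝ) ^ k ≤ (0.693 * m) ^ 2)
    (hC : exp (logEulerProd b) ≤ C) (hCk : C ≤ 1.648 * (k / 2 * 0.693) + 5.1)
    (hay : a ≤ y) (hyb : y ≤ b) :
    exp (logEulerProd y) ≤ exp eulerMascheroniConstant * log (θ y) + 5.1 := by
  have hθ : 0.693 * m ≤ θ y := by
    calc 0.693 * m ≤ m * log 2 := by
          rw [mul_comm]
          gcongr
          linarith [log_two_gt_d9]
      _ = log ((2 : ℝ) ^ m) := (log_pow _ _).symm
      _ ≤ log (primorial a) := log_le_log (by positivity) (by exact_mod_cast hm)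
      _ = θ a := by rw [Chebyshev.theta_eq_log_primorial, Nat.floor_natCast]
      _ ≤ θ y := Chebyshev.theta_mono (by exact_mod_cast hay)
  have hlog : k / 2 * log 2 ≤ log (θ y) := by
    have hle : log ((2 : ℝ) ^ k) ≤ log (θ y ^ 2) :=
      log_le_log (by positivity) (hk.trans (by gcongr))
    rw [log_pow, log_pow, Nat.cast_two] at hle
    linarith
  calc exp (logEulerProd y) ≤ C := (exp_le_exp.2 (logEulerProd_mono hyb)).trans hC
    _ ≤ 1.648 * (k / 2 * 0.693) + 5.1 := hCk
    _ ≤ exp eulerMascheroniConstant * (k / 2 * log 2) + 5.1 := by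
        gcongr
        · exact le_exp_eulerMascheroniConstant
        · linarith [log_two_gt_d9]
    _ ≤ exp eulerMascheroniConstant * log (θ y) + 5.1 := by gcongr

lemma exp_logEulerProd_le_div {n a b : ℕ} (hb : 0 < b)
    (h : (∏ p ∈ primesLE n, p) * b ≤ a * ∏ p ∈ primesLE n, (p - 1)) :
    exp (logEulerProd n) ≤ a / b :=
  exp_sum_neg_log_one_sub_inv_le (fun _ => Nat.two_le_of_mem_primesLE) hb h

lemma exp_logEulerProd_four_le : exp (logEulerProd 4) ≤ 3 :=
  (exp_logEulerProd_le_div (a := 3) one_pos (by decide +kernel)).trans_eq (by norm_num)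

lemma exp_logEulerProd_28_le : exp (logEulerProd 28) ≤ 6.2 :=
  (exp_logEulerProd_le_div (a := 62) (b := 10) (by norm_num) (by decide +kernel)).trans_eq
    (by norm_num)

lemma exp_logEulerProd_196_le : exp (logEulerProd 196) ≤ 9.53 :=
  (exp_logEulerProd_le_div (a := 953) (b := 100) (by norm_num) (by decide +kernel)).trans_eq
    (by norm_num)

set_option maxRecDepth 100000 in
lemma exp_sum_coprime_primorial_le :
    exp (∑ m ∈ Ioc (196 : ℕ) 1999 with m.Coprime (primorial 43), -log (1 - (m : ℝ)⁻¹)) ≤ 1.432 := by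
  have hprimorial : primorial 43 = 13082761331670030 := by decide +kernel
  rw [hprimorial]
  refine (exp_sum_neg_log_one_sub_inv_le (a := 1432) (b := 1000)
    (fun m hm => ?_) (by norm_num) (by decide +kernel)).trans_eq (by norm_num)
  have := mem_Ioc.1 (mem_filter.1 hm).1
  lia

lemma exp_logEulerProd_1999_le : exp (logEulerProd 1999) ≤ 13.65 :=
  calc exp (logEulerProd 1999)
      ≤ exp (logEulerProd 196) *
          exp (∑ m ∈ Ioc (196 : ℕ) 1999 with m.Coprime (primorial 43), -log (1 - (m : ℝ)⁻¹)) := by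
        rw [← exp_add]
        exact exp_le_exp.2 (logEulerProd_le_add_sum_coprime_primorial (by norm_num) (by norm_num))
    _ ≤ 9.53 * 1.432 := by
        gcongr
        · exact exp_logEulerProd_196_le
        · exact exp_sum_coprime_primorial_le
    _ ≤ 13.65 := by norm_num

lemma exp_logEulerProd_le_of_le_four {y : ℕ} (hy2 : 2 ≤ y) (hy4 : y ≤ 4) :
    exp (logEulerProd y) ≤ exp eulerMascheroniConstant * log (θ y) + 5.1 := by
  have hlog2 : 0.69 < log 2 := by linarith [log_two_gt_d9]
  have hθ : log 2 ≤ θ y := by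
    have hmono : θ (2 : ℕ) ≤ θ y := Chebyshev.theta_mono (by exact_mod_cast hy2)
    rwa [Chebyshev.theta_eq_log_primorial, Nat.floor_natCast, primorial_two] at hmono
  have hlog : -0.5 ≤ log (θ y) := by
    have hinv : (θ y)⁻¹ ≤ 1.5 := inv_le_of_inv_le₀ (by norm_num) (by norm_num; linarith)
    linarith [one_sub_inv_le_log_of_pos (hθ.trans_lt' (by linarith))]
  calc exp (logEulerProd y) ≤ 3 :=
        (exp_le_exp.2 (logEulerProd_mono hy4)).trans exp_logEulerProd_four_le
    _ ≤ exp eulerMascheroniConstant * -0.5 + 5.1 := by linarith [exp_eulerMascheroniConstant_le]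
    _ ≤ exp eulerMascheroniConstant * log (θ y) + 5.1 := by gcongr

lemma exp_logEulerProd_le {y : ℕ} (hy : 2 ≤ y) :
    exp (logEulerProd y) ≤ exp eulerMascheroniConstant * log (θ y) + 5.1 := by
  rcases le_or_gt y 4 with h4 | h4
  · exact exp_logEulerProd_le_of_le_four hy h4
  rcases le_or_gt y 28 with h28 | h28
  · exact exp_logEulerProd_le_of_two_pow_le_primorial (a := 5) (k := 2) (m := 4)
      (by decide +kernel) (by norm_num) exp_logEulerProd_28_le (by norm_num) h4 h28
  rcases le_or_gt y 196 with h196 | h196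
  · exact exp_logEulerProd_le_of_two_pow_le_primorial (a := 29) (k := 8) (m := 32)
      (by decide +kernel) (by norm_num) exp_logEulerProd_196_le (by norm_num) h28 h196
  rcases le_or_gt y 1999 with h1999 | h1999
  · exact exp_logEulerProd_le_of_two_pow_le_primorial (a := 197) (k := 15) (m := 264)
      (by decide +kernel) (by norm_num) exp_logEulerProd_1999_le (by norm_num) h196 h1999
  · exact exp_logEulerProd_le_of_two_thousand_le h1999

end MertensProduct

section Totient

open Finset Real
open Nat (primesLE)
open scoped Nat Chebyshev

lemma sum_le_sum_of_card_eq_of_forall_sdiff {ι M : Type*} [DecidableEq ι] [AddCommMonoid M]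
    [PartialOrder M] [IsOrderedAddMonoid M] {S T : Finset ι} {f : ι → M} {c : M} (hcard : #S = #T)
    (hS : ∀ i ∈ S \ T, f i ≤ c) (hT : ∀ i ∈ T \ S, c ≤ f i) :
    ∑ i ∈ S, f i ≤ ∑ i ∈ T, f i := by
  rw [← sum_inter_add_sum_sdiff S T f, ← sum_inter_add_sum_sdiff T S f, inter_comm T S]
  gcongr 1
  calc ∑ i ∈ S \ T, f i ≤ #(S \ T) • c := sum_le_card_nsmul _ _ _ hS
    _ = #(T \ S) • c := by rw [card_sdiff_comm hcard]
    _ ≤ ∑ i ∈ T \ S, f i := card_nsmul_le_sum _ _ _ hT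

lemma sum_le_sum_primesLE_of_antitoneOn {M : Type*} [AddCommMonoid M] [PartialOrder M]
    [IsOrderedAddMonoid M] {f : ℕ → M} (hf : AntitoneOn f (Set.Ici 2)) {y : ℕ} {T : Finset ℕ}
    (hT : ∀ p ∈ T, p.Prime) (hcard : #T = #(primesLE y)) :
    ∑ p ∈ T, f p ≤ ∑ p ∈ primesLE y, f p := by
  refine sum_le_sum_of_card_eq_of_forall_sdiff (c := f (max 2 y)) hcard (fun p hp => ?_)
    fun p hp => ?_
  · obtain ⟨hpT, hpy⟩ := mem_sdiff.1 hp
    have hprime := hT p hpT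
    have hyp : y < p := by
      by_contra! hle
      exact hpy (Nat.mem_primesLE.2 ⟨hle, hprime⟩)
    exact hf (le_max_left 2 y) hprime.two_le (max_le hprime.two_le hyp.le)
  · obtain ⟨hle, hprime⟩ := Nat.mem_primesLE.1 (mem_sdiff.1 hp).1
    exact hf hprime.two_le (le_max_left 2 y) (hle.trans (le_max_right 2 y))

lemma exists_card_primesLE_eq {k : ℕ} (hk : k ≠ 0) : ∃ y, 2 ≤ y ∧ #(primesLE y) = k := by
  refine ⟨Nat.nth Nat.Prime (k - 1), (Nat.prime_nth_prime _).two_le, ?_⟩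
  rw [Nat.primesLE_card_eq_primeCounting, Nat.primeCounting, Nat.primeCounting',
    Nat.count_nth_succ_of_infinite Nat.infinite_setOfPred_prime, Nat.sub_one_add_one hk]

lemma antitoneOn_neg_log_one_sub_inv :
    AntitoneOn (fun n : ℕ => -log (1 - (n : ℝ)⁻¹)) (Set.Ici 2) := by
  intro m hm n _ hmn
  have hm1 : (1 : ℝ) < m := by exact_mod_cast Set.mem_Ici.1 hm
  have hinv : (m : ℝ)⁻¹ < 1 := inv_lt_one_of_one_lt₀ hm1
  have hanti : (n : ℝ)⁻¹ ≤ (m : ℝ)⁻¹ := inv_anti₀ (by linarith) (by exact_mod_cast hmn)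
  exact neg_le_neg (log_le_log (by linarith) (by linarith))

lemma antitoneOn_neg_log_natCast : AntitoneOn (fun n : ℕ => -log (n : ℝ)) (Set.Ici 2) := by
  intro m hm n _ hmn
  have hpos : (0 : ℝ) < m := by exact_mod_cast two_pos.trans_le (Set.mem_Ici.1 hm)
  exact neg_le_neg (log_le_log hpos (by exact_mod_cast hmn))

lemma theta_le_log_of_card_primesLE_eq {n y : ℕ} (hn : n ≠ 0)
    (hcard : #n.primeFactors = #(primesLE y)) : θ y ≤ log n := by
  have hprime : ∀ p ∈ n.primeFactors, p.Prime := fun _ => Nat.prime_of_mem_primeFactors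
  have hsum := sum_le_sum_primesLE_of_antitoneOn antitoneOn_neg_log_natCast hprime hcard
  rw [sum_neg_distrib, sum_neg_distrib, neg_le_neg_iff] at hsum
  calc θ y = ∑ p ∈ primesLE y, log p := Chebyshev.theta_eq_sum_primesLE_log y
    _ ≤ ∑ p ∈ n.primeFactors, log p := hsum
    _ = log (∏ p ∈ n.primeFactors, p : ℕ) := by
        rw [Nat.cast_prod, log_prod fun p hp => Nat.cast_ne_zero.2 (hprime p hp).ne_zero]
    _ ≤ log n := log_le_log
        (by exact_mod_cast prod_pos fun p hp => (hprime p hp).pos)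
        (by exact_mod_cast Nat.le_of_dvd hn.bot_lt n.prod_primeFactors_dvd)

lemma exp_sum_primeFactors_neg_log_one_sub_inv_le {n : ℕ} (hn : 2 ≤ n) :
    exp (∑ p ∈ n.primeFactors, -log (1 - (p : ℝ)⁻¹)) ≤
      exp eulerMascheroniConstant * log (log n) + 5.1 := by
  have hne : #n.primeFactors ≠ 0 := (card_pos.2 (Nat.nonempty_primeFactors.2 hn)).ne'
  obtain ⟨y, hy, hcard⟩ := exists_card_primesLE_eq hne
  have hθ : 0 < θ y := Chebyshev.theta_pos (by exact_mod_cast hy)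
  have hθn : θ y ≤ log n := theta_le_log_of_card_primesLE_eq (by lia) hcard.symm
  calc exp (∑ p ∈ n.primeFactors, -log (1 - (p : ℝ)⁻¹))
      ≤ exp (logEulerProd y) :=
        exp_le_exp.2 (sum_le_sum_primesLE_of_antitoneOn antitoneOn_neg_log_one_sub_inv
          (fun _ => Nat.prime_of_mem_primeFactors) hcard.symm)
    _ ≤ exp eulerMascheroniConstant * log (θ y) + 5.1 := exp_logEulerProd_le hy
    _ ≤ exp eulerMascheroniConstant * log (log n) + 5.1 := by gcongr

lemma totient_mul_exp_sum_neg_log_one_sub_inv (n : ℕ) :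
    φ n * exp (∑ p ∈ n.primeFactors, -log (1 - (p : ℝ)⁻¹)) = n := by
  have htwo : ∀ p ∈ n.primeFactors, 2 ≤ p := fun _ hp => (Nat.prime_of_mem_primeFactors hp).two_le
  have hpos : 0 < ∏ p ∈ n.primeFactors, (p - 1) :=
    prod_pos fun p hp => Nat.sub_pos_of_lt (htwo p hp)
  rw [exp_sum_neg_log_one_sub_inv htwo, mul_div_assoc', div_eq_iff (by exact_mod_cast hpos.ne')]
  exact_mod_cast n.totient_mul_prod_primeFactors

lemma le_totient_mul_of_dvd {d n : ℕ} (hn : 2 ≤ n) (hdvd : d ∣ n) :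
    d ≤ φ d * (exp eulerMascheroniConstant * log (log n) + 5.1) := by
  calc (d : ℝ) = φ d * exp (∑ p ∈ d.primeFactors, -log (1 - (p : ℝ)⁻¹)) :=
        (totient_mul_exp_sum_neg_log_one_sub_inv d).symm
    _ ≤ φ d * exp (∑ p ∈ n.primeFactors, -log (1 - (p : ℝ)⁻¹)) := by
        gcongr ?_ * exp ?_
        exact sum_le_sum_of_subset_of_nonneg (Nat.primeFactors_mono hdvd (by lia)) fun p hp _ =>
          neg_log_one_sub_inv_nonneg (Nat.prime_of_mem_primeFactors hp).two_le
    _ ≤ φ d * (exp eulerMascheroniConstant * log (log n) + 5.1) := by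
        gcongr
        exact exp_sum_primeFactors_neg_log_one_sub_inv_le hn

end Totient

section EllipticTerms

open Finset Real

lemma abs_legendreSym_le_one (p : ℕ) [Fact p.Prime] (a : ℤ) : |legendreSym p a| ≤ 1 := by
  rcases quadraticChar_isQuadratic (ZMod p) (a : ZMod p) with h | h | h <;> simp [legendreSym, h]

lemma abs_chiFour_le_one (p : ℕ) : |chiFour p| ≤ 1 := by
  unfold chiFour
  split_ifs with hp h2
  · simp
  · exact @abs_legendreSym_le_one p ⟨hp⟩ (-4)
  · simp

lemma abs_chiThree_le_one (p : ℕ) : |chiThree p| ≤ 1 := by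
  unfold chiThree
  split_ifs with hp h2
  · simp
  · exact @abs_legendreSym_le_one p ⟨hp⟩ (-3)
  · simp

lemma prod_one_sub_mul_prod_one_add_le {ι : Type*} {χ : ι → ℤ} (hχ : ∀ i, |χ i| ≤ 1)
    (S T : Finset ι) : (∏ i ∈ S, (1 - χ i)) * ∏ i ∈ T, (1 + χ i) ≤ 2 ^ (#S + #T) := by
  have hbound (i : ι) := abs_le.1 (hχ i)
  rw [pow_add]
  refine mul_le_mul ((prod_le_prod (fun i _ => ?_) fun i _ => ?_).trans_eq (prod_const 2))
    ((prod_le_prod (fun i _ => ?_) fun i _ => ?_).trans_eq (prod_const 2))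
    (prod_nonneg fun i _ => ?_) (by positivity) <;> linarith [hbound i]

lemma four_pow_card_primeFactors_le {n : ℕ} (hn : n ≠ 0) :
    (4 : ℝ) ^ #n.primeFactors ≤ 8 / 3 * n := by
  -- Only `p = 2` and `p = 3` are smaller than `4`; they cost the factors `2` and `4 / 3`.
  have hfour : ∀ p ∈ n.primeFactors,
      (4 : ℝ) ≤ (if p = 2 then 2 else 1) * (if p = 3 then 4 / 3 else 1) * p := by
    intro p hp
    have hprime := Nat.prime_of_mem_primeFactors hp
    rcases eq_or_ne p 2 with rfl | h2
    · norm_num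
    rcases eq_or_ne p 3 with rfl | h3
    · norm_num
    have h4 : 4 ≤ p := by have := hprime.two_le; lia
    simpa [h2, h3] using h4
  have hle : ((∏ p ∈ n.primeFactors, p : ℕ) : ℝ) ≤ n := by
    exact_mod_cast Nat.le_of_dvd hn.bot_lt n.prod_primeFactors_dvd
  calc (4 : ℝ) ^ #n.primeFactors
      ≤ ∏ p ∈ n.primeFactors,
          (if p = 2 then (2 : ℝ) else 1) * (if p = 3 then 4 / 3 else 1) * p := by
        rw [← prod_const]
        exact prod_le_prod (fun _ _ => by norm_num) hfour
    _ = (if 2 ∈ n.primeFactors then (2 : ℝ) else 1) *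
          (if 3 ∈ n.primeFactors then 4 / 3 else 1) * (∏ p ∈ n.primeFactors, p : ℕ) := by
        rw [prod_mul_distrib, prod_mul_distrib, prod_ite_eq', prod_ite_eq', Nat.cast_prod]
    _ ≤ 2 * (4 / 3) * n := by
        gcongr <;> split_ifs <;> norm_num
    _ = 8 / 3 * n := by norm_num

lemma two_pow_card_primeFactors_add_le {m n : ℕ} (hm : m ≠ 0) (hn : n ≠ 0) :
    (2 : ℝ) ^ (#m.primeFactors + #n.primeFactors) ≤ 8 / 3 * √(m * n) := by
  refine le_of_sq_le_sq ?_ (by positivity)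
  calc ((2 : ℝ) ^ (#m.primeFactors + #n.primeFactors)) ^ 2
      = 4 ^ #m.primeFactors * 4 ^ #n.primeFactors := by
        rw [← pow_add, ← pow_mul, mul_comm, pow_mul]
        norm_num
    _ ≤ (8 / 3 * m) * (8 / 3 * n) := by
        gcongr
        · exact four_pow_card_primeFactors_le hm
        · exact four_pow_card_primeFactors_le hn
    _ = (8 / 3 * √(m * n)) ^ 2 := by
        rw [mul_pow, sq_sqrt (by positivity)]
        ring

lemma eOne_le {D N : ℕ} (hD : D ≠ 0) (hN : N ≠ 0) : (eOne D N : ℝ) ≤ 8 / 3 * √(D * N) :=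
  le_trans (by exact_mod_cast prod_one_sub_mul_prod_one_add_le abs_chiFour_le_one _ _)
    (two_pow_card_primeFactors_add_le hD hN)

lemma eThree_le {D N : ℕ} (hD : D ≠ 0) (hN : N ≠ 0) : (eThree D N : ℝ) ≤ 8 / 3 * √(D * N) :=
  le_trans (by exact_mod_cast prod_one_sub_mul_prod_one_add_le abs_chiThree_le_one _ _)
    (two_pow_card_primeFactors_add_le hD hN)

end EllipticTerms

section GenusLowerBound

open Finset Real
open scoped Nat

lemma le_dedekindPsi (N : ℕ) : N ≤ dedekindPsi N :=
  le_mul_of_one_le_right N.cast_nonneg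
    (one_le_prod fun p _ => le_add_of_nonneg_right (by positivity))

lemma log_log_six_pos : 0 < log (log 6) := by
  have h := mul_log_le_mul_log_of_pow_le_pow two_pos (by norm_num : 2 ^ 5 ≤ 6 ^ 2)
  push_cast at h
  exact log_pos (by linarith [log_two_gt_d9])

lemma le_three_div_log_log_six : 5.1 ≤ 3 / log (log 6) := by
  have hlog : log 6 ≤ 1.7945 := by
    have h := mul_log_le_mul_log_of_pow_le_pow (by norm_num) (by norm_num : 6 ^ 17 ≤ 2 ^ 44)
    push_cast at h
    linarith [log_two_lt_d9]
  have hexp : 1.7945 ≤ exp (3 / 5.1) := by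
    have h := sum_le_exp_of_nonneg (by norm_num : (0 : ℝ) ≤ 3 / 5.1) 6
    norm_num [sum_range_succ, Nat.factorial] at h ⊢
    linarith
  rw [le_div_comm₀ (by norm_num) log_log_six_pos]
  exact (log_le_iff_le_exp (log_pos (by norm_num))).2 (hlog.trans hexp)

theorem genus_lower_bound'_general (D N : ℕ) (hDN : 1 < D * N) :
    (Nat.totient D : ℝ) * dedekindPsi N / 12 - (eOne D N : ℝ) / 4 - (eThree D N : ℝ) / 3 >
      ((D : ℝ) * N) / 12 *
        (1 / (exp eulerMascheroniConstant * log (log ((D : ℝ) * N)) + 3 / log (log 6))) -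
      7 / 3 * √((D : ℝ) * N) := by
  obtain ⟨hD, hN⟩ : D ≠ 0 ∧ N ≠ 0 := mul_ne_zero_iff.1 (by lia)
  set B := exp eulerMascheroniConstant * log (log ((D : ℝ) * N)) + 3 / log (log 6)
  have hB : exp eulerMascheroniConstant * log (log (D * N : ℕ)) + 5.1 ≤ B := by
    rw [Nat.cast_mul]
    exact add_le_add_right le_three_div_log_log_six _
  have hBpos : 0 < B :=
    (exp_pos _).trans_le ((exp_sum_primeFactors_neg_log_one_sub_inv_le hDN).trans hB)
  have htotient : D / B ≤ φ D := by
    rw [div_le_iff₀ hBpos]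
    exact (le_totient_mul_of_dvd hDN (Nat.dvd_mul_right D N)).trans (by gcongr)
  have hmain : (D * N : ℝ) / 12 * (1 / B) ≤ φ D * dedekindPsi N / 12 := by
    calc (D * N : ℝ) / 12 * (1 / B) = D / B * N / 12 := by ring
      _ ≤ φ D * dedekindPsi N / 12 := by gcongr; exact le_dedekindPsi N
  have hsqrt : 0 < √((D : ℝ) * N) := by positivity
  linarith [eOne_le hD hN, eThree_le hD hN]

end GenusLowerBound

/-- For `D > 1` a squarefree integer with an even number of distinct prime
factors (so `D ≥ 6`) and `N` a positive integer coprime to `D`, one has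
`φ(D)ψ(N)/12 - e₁(D,N)/4 - e₃(D,N)/3
  > (DN/12)(1/(e^γ log log (DN) + 3/log log 6)) - 7√(DN)/3`. -/
theorem genus_lower_bound' (D N : ℕ) (hD1 : 1 < D) (hDsf : Squarefree D)
    (hDeven : Even D.primeFactors.card) (hNpos : 0 < N) (hgcd : Nat.gcd D N = 1) :
    (Nat.totient D : ℝ) * dedekindPsi N / 12 - (eOne D N : ℝ) / 4 - (eThree D N : ℝ) / 3 >
      ((D : ℝ) * N) / 12 *
        (1 / (Real.exp Real.eulerMascheroniConstant * Real.log (Real.log ((D : ℝ) * N)) +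
          3 / Real.log (Real.log 6))) -
      7 / 3 * Real.sqrt ((D : ℝ) * N) :=
  genus_lower_bound'_general D N (hD1.trans_le (Nat.le_mul_of_pos_right D hNpos))
end

section
/- Let Δ be a negative integer with Δ ≡ 0 or 1 (mod 4), let o(Δ) = ℤ[x]/(x² − Δx + (Δ² − Δ)/4) be the imaginary quadratic order of discriminant Δ, and let r be the number of distinct odd primes dividing Δ. Then the number of elements c of the class group Pic(o(Δ)) = ClassGroup o(Δ) satisfying c² = 1 is equal to 2^μ, where μ = r − 1 if Δ ≡ 1 (mod 4) or Δ ≡ 4 (mod 16); μ = r if Δ ≡ 8 or 12 (mod 16) or Δ ≡ 16 (mod 32); and μ = r + 1 if Δ ≡ 0 (mod 32). -/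
open Polynomial

/-- The imaginary quadratic order of discriminant `Δ`:
`o(Δ) = ℤ[x]/(x² − Δx + (Δ² − Δ)/4)`. -/
abbrev quadOrder (Δ : ℤ) : Type :=
  ℤ[X] ⧸ Ideal.span {(X ^ 2 - C Δ * X + C ((Δ ^ 2 - Δ) / 4) : ℤ[X])}

/-!
Gauss's ambiguous forms. Put `ω² = p + t ω` and `D = t² + 4 p < 0`. Two facts are combined:

* The primitive forms `a x² + b x y + c y²` of discriminant `D` with `a > 0` and `b = 0` or `b = a`
  correspond to factorizations of an integer into two coprime factors, so their number is a power
  of two, which depends on `D` modulo `32` and on the primes dividing `D`.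
* The ideals `ℤ a + ℤ (ω + k)` with `t + 2 k = b` attached to these forms represent the invertible
  ideals equal to their conjugate, up to integer factors. By Hilbert's Theorem 90 every ideal class
  of order dividing two contains such an ideal. If `D ≠ -4`, every unit is up to sign the square of
  a unit, so two such ideals lie in the same class only if they differ by an integer or by a
  multiple of `√D`. Each class of order dividing two thus comes from exactly two forms.

In discriminant `-4` the order is `ℤ[i]`, whose class group is trivial, and there are again two
forms: `x² + y²` and `2 x² + 2 x y + y²`.
-/

open scoped nonZeroDivisors QuadraticAlgebra

lemma eq_prod_filter_primeFactors {a b : ℕ} (hab : a.Coprime b) (h : a * b ≠ 0) :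
    a = ((a * b).factorization.filter (· ∈ a.primeFactors)).prod (· ^ ·) := by
  have ha : a ≠ 0 := left_ne_zero_of_mul h
  conv_lhs => rw [← Nat.prod_factorization_pow_eq_self ha]
  congr 1
  ext p
  by_cases hp : p ∈ a.primeFactors
  · rw [Finsupp.filter_apply_pos _ _ hp,
      Nat.factorization_eq_of_coprime_left hab
        (Nat.mem_primeFactors_iff_mem_primeFactorsList.mp hp)]
  · rw [Finsupp.filter_apply_neg _ _ hp]
    exact Finsupp.notMem_support_iff.mp hp

lemma primeFactors_prod_filter_factorization (n : ℕ) (q : ℕ → Prop) [DecidablePred q] :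
    ((n.factorization.filter q).prod (· ^ ·)).primeFactors = n.primeFactors.filter q := by
  rw [← Nat.support_factorization, Nat.prod_pow_factorization_eq_self, Finsupp.support_filter,
    Nat.support_factorization]
  intro p hp
  rw [Finsupp.support_filter] at hp
  exact Nat.prime_of_mem_primeFactors (Finset.filter_subset _ _ hp)

lemma card_filter_coprime_divisorsAntidiagonal {n : ℕ} (hn : n ≠ 0) :
    (n.divisorsAntidiagonal.filter fun x => x.1.Coprime x.2).card = 2 ^ n.primeFactors.card := by
  rw [← Finset.card_powerset]
  refine Finset.card_bij (fun x _ => x.1.primeFactors) ?_ ?_ ?_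
  · intro x hx
    obtain ⟨⟨rfl, -⟩, -⟩ := by simpa only [Finset.mem_filter, Nat.mem_divisorsAntidiagonal] using hx
    exact Finset.mem_powerset.mpr (Nat.primeFactors_mono (dvd_mul_right _ _) hn)
  · intro x hx y hy hxy
    simp only [Finset.mem_filter, Nat.mem_divisorsAntidiagonal] at hx hy
    obtain ⟨⟨hx, -⟩, hxc⟩ := hx
    obtain ⟨⟨hy, -⟩, hyc⟩ := hy
    have hfst : x.1 = y.1 := by
      rw [eq_prod_filter_primeFactors hxc (hx ▸ hn), eq_prod_filter_primeFactors hyc (hy ▸ hn),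
        hx, hy, hxy]
    refine Prod.ext hfst (Nat.eq_of_mul_eq_mul_left (Nat.pos_of_ne_zero ?_) (hx.trans ?_))
    · exact left_ne_zero_of_mul (hx ▸ hn)
    · rw [hfst, hy]
  · intro s hs
    have hs : s ⊆ n.primeFactors := Finset.mem_powerset.mp hs
    set a := (n.factorization.filter (· ∈ s)).prod (· ^ ·)
    set b := (n.factorization.filter fun p => ¬p ∈ s).prod (· ^ ·) with hb
    have hab : a * b = n :=
      (Finsupp.prod_filter_mul_prod_filter_not _ _ _).trans (Nat.prod_factorization_pow_eq_self hn)
    have ha_primes : a.primeFactors = n.primeFactors.filter (· ∈ s) :=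
      primeFactors_prod_filter_factorization n _
    refine ⟨(a, b), ?_, ?_⟩
    · simp only [Finset.mem_filter, Nat.mem_divisorsAntidiagonal]
      refine ⟨⟨hab, hn⟩, ?_⟩
      rw [← Nat.disjoint_primeFactors (left_ne_zero_of_mul (hab ▸ hn))
        (right_ne_zero_of_mul (hab ▸ hn)), ha_primes, hb, primeFactors_prod_filter_factorization]
      exact Finset.disjoint_filter_filter_not _ _ _
    · rw [ha_primes, Finset.filter_mem_eq_inter, Finset.inter_eq_right.mpr hs]

/-- The factorizations of an integer into two coprime factors, the first of them positive. -/
def coprimeFactorizations (n : ℤ) : Set (ℤ × ℤ) :=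
  {x | 0 < x.1 ∧ x.1 * x.2 = n ∧ IsCoprime x.1 x.2}

lemma ncard_coprimeFactorizations {n : ℤ} (hn : 0 < n) :
    (coprimeFactorizations n).ncard = 2 ^ n.natAbs.primeFactors.card := by
  lift n to ℕ using hn.le
  have hn : n ≠ 0 := by exact_mod_cast hn.ne'
  rw [Int.natAbs_natCast, ← card_filter_coprime_divisorsAntidiagonal hn, ← Set.ncard_coe_finset]
  refine (Set.ncard_congr (fun x _ => ((x.1 : ℤ), (x.2 : ℤ))) ?_ ?_ ?_).symm
  · rintro ⟨a, b⟩ h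
    simp only [Finset.coe_filter, Nat.mem_divisorsAntidiagonal, Set.mem_ofPred_eq] at h
    obtain ⟨⟨rfl, -⟩, h⟩ := h
    have ha : a ≠ 0 := left_ne_zero_of_mul hn
    exact ⟨by positivity, (Nat.cast_mul a b).symm, Nat.isCoprime_iff_coprime.mpr h⟩
  · rintro ⟨a, b⟩ ⟨c, d⟩ - - h
    simpa only [Prod.mk.injEq, Nat.cast_inj] using h
  · rintro ⟨a, b⟩ ⟨ha : 0 < a, hab : a * b = n, h⟩
    have hb : 0 < b := pos_of_mul_pos_right (hab ▸ by positivity : 0 < a * b) ha.le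
    lift a to ℕ using ha.le
    lift b to ℕ using hb.le
    refine ⟨(a, b), ?_, rfl⟩
    simp only [Finset.coe_filter, Nat.mem_divisorsAntidiagonal, Set.mem_ofPred_eq]
    exact ⟨⟨by exact_mod_cast hab, hn⟩, Nat.isCoprime_iff_coprime.mp h⟩

lemma add_emod_four_of_odd_mul {a b : ℤ} (h : Odd (a * b)) : (a + b) % 4 = (a * b + 1) % 4 := by
  obtain ⟨⟨m, rfl⟩, ⟨n, rfl⟩⟩ := Int.odd_mul.mp h
  rw [show (2 * m + 1) * (2 * n + 1) + 1 = 2 * m + 1 + (2 * n + 1) + m * n * 4 by ring,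
    Int.add_mul_emod_self_right]

lemma two_mem_primeFactors_natAbs {n : ℤ} : 2 ∈ n.natAbs.primeFactors ↔ n % 2 = 0 ∧ n ≠ 0 := by
  simp only [Nat.mem_primeFactors, Nat.prime_two, true_and]
  omega

lemma primeFactors_natAbs_four_mul {n : ℤ} (hn : n ≠ 0) :
    (4 * n).natAbs.primeFactors = insert 2 n.natAbs.primeFactors := by
  rw [Int.natAbs_mul, show (4 : ℤ).natAbs = 2 ^ 2 by rfl, Nat.primeFactors_mul (by norm_num)
    (Int.natAbs_ne_zero.mpr hn), Nat.primeFactors_prime_pow two_ne_zero Nat.prime_two]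
  rfl

/-- The number of assigned characters of the discriminant `D` in genus theory. -/
def numAssignedCharacters (D : ℤ) : ℕ :=
  (D.natAbs.primeFactors.erase 2).card +
    if D % 4 = 1 ∨ D % 16 = 4 then 0
    else if D % 16 = 8 ∨ D % 16 = 12 ∨ D % 32 = 16 then 1
    else 2

/-- A primitive binary quadratic form `a x² + b x y + c y²` of discriminant `D` with `a > 0` which
is visibly equivalent to its inverse: either diagonal (`b = 0`) or with `b = a`. Primitivity of the
form amounts to coprimality of `a` and `c`, as `a` divides `b`. -/
@[ext]
structure AmbiguousForm (D : ℤ) where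
  a : ℤ
  b : ℤ
  c : ℤ
  a_pos : 0 < a
  b_eq : b = 0 ∨ b = a
  disc : b ^ 2 - 4 * a * c = D
  coprime : IsCoprime a c

namespace AmbiguousForm

variable {D : ℤ}

lemma b_eq_a {f : AmbiguousForm D} (hf : f.b ≠ 0) : f.b = f.a :=
  f.b_eq.resolve_left hf

lemma a_dvd_b (f : AmbiguousForm D) : f.a ∣ f.b := by
  rcases f.b_eq with h | h <;> simp [h]

lemma a_dvd_disc (f : AmbiguousForm D) : f.a ∣ D := by
  have := dvd_sub (dvd_pow f.a_dvd_b two_ne_zero) ((dvd_mul_left f.a 4).mul_right f.c)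
  rwa [f.disc] at this

lemma ext_of_a_b {f g : AmbiguousForm D} (ha : f.a = g.a) (hb : f.b = g.b) : f = g := by
  refine AmbiguousForm.ext ha hb (mul_left_cancel₀ f.a_pos.ne' ?_)
  have := f.disc.trans g.disc.symm
  rw [← ha, ← hb] at this
  linarith

lemma a_mul_eq_neg_disc {f : AmbiguousForm D} (hf : f.b ≠ 0) : f.a * (4 * f.c - f.a) = -D := by
  have := f.disc
  rw [b_eq_a hf] at this
  linarith

lemma finite (hD : D ≠ 0) : Finite (AmbiguousForm D) := by
  have ha (f : AmbiguousForm D) : f.a ∈ Set.Icc 0 |D| :=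
    ⟨f.a_pos.le, Int.le_of_dvd (abs_pos.mpr hD) <| (dvd_abs _ _).mpr f.a_dvd_disc⟩
  refine Finite.of_injective
    (fun f => ((⟨f.a, ha f⟩ : Set.Icc 0 |D|), f.b = 0)) fun f g hfg => ?_
  obtain ⟨hfa, hfb⟩ := by simpa only [Prod.mk.injEq, Subtype.mk.injEq, eq_iff_iff] using hfg
  refine ext_of_a_b hfa ?_
  by_cases h : f.b = 0
  · rw [h, hfb.mp h]
  · rw [b_eq_a h, b_eq_a (hfb.not.mp h), hfa]

/-- The forms `a x² + c y²`; the remaining ambiguous forms have `b = a`. -/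
def diagonal (D : ℤ) : Set (AmbiguousForm D) :=
  {f | f.b = 0}

lemma diagonal_eq_empty (hD : D % 4 = 1) : diagonal D = ∅ := by
  refine Set.eq_empty_of_forall_notMem fun f (hf : f.b = 0) => ?_
  have := f.disc
  rw [hf, mul_assoc] at this
  omega

lemma ncard_diagonal (m : ℤ) :
    (diagonal (-4 * m)).ncard = (coprimeFactorizations m).ncard := by
  refine Set.ncard_congr (fun f _ => (f.a, f.c)) ?_ ?_ ?_
  · intro f (hf : f.b = 0)
    have := f.disc
    rw [hf] at this
    exact ⟨f.a_pos, by dsimp only; linarith, f.coprime⟩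
  · intro f g (hf : f.b = 0) (hg : g.b = 0) h
    exact ext_of_a_b (congrArg Prod.fst h) (hf.trans hg.symm)
  · rintro ⟨a, c⟩ ⟨ha, rfl, hac⟩
    exact ⟨⟨a, 0, c, ha, Or.inl rfl, by ring, hac⟩, rfl, rfl⟩

lemma ncard_compl_diagonal_of_odd (hD : D % 4 = 1) :
    (diagonal D)ᶜ.ncard = (coprimeFactorizations (-D)).ncard := by
  refine Set.ncard_congr (fun f _ => (f.a, 4 * f.c - f.a)) ?_ ?_ ?_
  · intro f hf
    have hfD := a_mul_eq_neg_disc hf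
    have hfD_odd : Odd (f.a * (4 * f.c - f.a)) := Int.odd_iff.mpr (by omega)
    have ha : IsCoprime f.a 2 := Int.isCoprime_two_right.mpr (Int.odd_mul.mp hfD_odd).1
    refine ⟨f.a_pos, hfD, ?_⟩
    have := (ha.mul_right ha).mul_right f.coprime
    simpa [sub_eq_add_neg] using this.add_mul_left_right (-1)
  · intro f g hf hg h
    have ha : f.a = g.a := congrArg Prod.fst h
    exact ext_of_a_b ha (by rw [b_eq_a hf, b_eq_a hg, ha])
  · rintro ⟨a, e⟩ ⟨ha : 0 < a, hae : a * e = -D, hcop : IsCoprime a e⟩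
    obtain ⟨c, hc⟩ : 4 ∣ a + e := by
      have := add_emod_four_of_odd_mul (a := a) (b := e) (Int.odd_iff.mpr (by omega))
      omega
    obtain rfl : e = 4 * c - a := by linarith
    have hcop : IsCoprime a (4 * c) := by simpa using hcop.add_mul_left_right 1
    exact ⟨⟨a, a, c, ha, Or.inr rfl, by linarith, hcop.of_mul_right_right⟩, ha.ne', rfl⟩

lemma exists_a_eq_two_mul {m : ℤ} {f : AmbiguousForm (-4 * m)} (hf : f.b ≠ 0) :
    ∃ e, 0 < e ∧ f.a = 2 * e ∧ f.b = 2 * e ∧ e * (2 * f.c - e) = m ∧ Odd f.c ∧ IsCoprime e f.c := by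
  have hfD := a_mul_eq_neg_disc hf
  have h2 : 2 ∣ f.a := Int.prime_two.dvd_of_dvd_pow (n := 2) ⟨2 * (f.a * f.c - m), by linarith⟩
  obtain ⟨e, he⟩ := h2
  have hcop : IsCoprime (2 * e) f.c := he ▸ f.coprime
  refine ⟨e, by linarith [f.a_pos], he, (b_eq_a hf).trans he, ?_,
    Int.isCoprime_two_left.mp hcop.of_mul_left_left, hcop.of_mul_left_right⟩
  rw [he] at hfD
  linarith

lemma ncard_compl_diagonal_of_emod_four_eq_one {m : ℤ} (hm : m % 4 = 1) :
    (diagonal (-4 * m))ᶜ.ncard = (coprimeFactorizations m).ncard := by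
  refine Set.ncard_congr (fun f _ => (f.a / 2, 2 * f.c - f.a / 2)) ?_ ?_ ?_
  · intro f hf
    obtain ⟨e, he_pos, ha, -, hem, -, hcop⟩ := exists_a_eq_two_mul hf
    have hem_odd : Odd (e * (2 * f.c - e)) := Int.odd_iff.mpr (by omega)
    have he : Odd e := (Int.odd_mul.mp hem_odd).1
    rw [show f.a / 2 = e by omega]
    refine ⟨he_pos, hem, ?_⟩
    simpa [sub_eq_add_neg] using
      ((Int.isCoprime_two_right.mpr he).mul_right hcop).add_mul_left_right (-1)
  · intro f g hf hg h
    obtain ⟨d, -, hda, hdb, -⟩ := exists_a_eq_two_mul hf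
    obtain ⟨e, -, hea, heb, -⟩ := exists_a_eq_two_mul hg
    have : f.a / 2 = g.a / 2 := congrArg Prod.fst h
    exact ext_of_a_b (by omega) (by omega)
  · rintro ⟨e, e'⟩ ⟨he : 0 < e, hee : e * e' = m, hcop : IsCoprime e e'⟩
    have hsum : (e + e') % 4 = 2 := by
      have := add_emod_four_of_odd_mul (a := e) (b := e') (Int.odd_iff.mpr (by omega))
      omega
    obtain ⟨c, rfl⟩ : ∃ c, e' = 2 * c - e := ⟨(e + e') / 2, by omega⟩
    have hcop : IsCoprime e (2 * c) := by simpa using hcop.add_mul_left_right 1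
    have hc : IsCoprime 2 c := Int.isCoprime_two_left.mpr (Int.odd_iff.mpr (by omega))
    exact ⟨⟨2 * e, 2 * e, c, by omega, Or.inr rfl, by rw [← hee]; ring,
      hc.mul_left hcop.of_mul_right_right⟩, by simp [diagonal, he.ne'], by simp⟩

lemma four_dvd_a {m : ℤ} {f : AmbiguousForm (-4 * (4 * m))} (hf : f.b ≠ 0) : 4 ∣ f.a := by
  obtain ⟨e, -, ha, -, hem, -, -⟩ := exists_a_eq_two_mul hf
  have h2 : 2 ∣ e := Int.prime_two.dvd_of_dvd_pow (n := 2) ⟨e * f.c - 2 * m, by linarith⟩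
  omega

lemma ncard_compl_diagonal_of_even {m : ℤ} (hm : Even m) :
    (diagonal (-4 * (4 * m)))ᶜ.ncard = (coprimeFactorizations m).ncard := by
  refine Set.ncard_congr (fun f _ => (f.a / 4, f.c - f.a / 4)) ?_ ?_ ?_
  · intro f hf
    obtain ⟨d, hd⟩ := four_dvd_a hf
    have hdm := a_mul_eq_neg_disc hf
    have ha := f.a_pos
    have hcop : IsCoprime (4 * d) f.c := hd ▸ f.coprime
    rw [hd] at hdm
    rw [show f.a / 4 = d by omega]
    refine ⟨by dsimp only; omega, by dsimp only; linarith, ?_⟩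
    simpa [sub_eq_add_neg] using hcop.of_mul_left_right.add_mul_left_right (-1)
  · intro f g hf hg h
    have : f.a / 4 = g.a / 4 := congrArg Prod.fst h
    have ha : f.a = g.a := by
      have := four_dvd_a hf
      have := four_dvd_a hg
      omega
    exact ext_of_a_b ha (by rw [b_eq_a hf, b_eq_a hg, ha])
  · rintro ⟨d, e⟩ ⟨hd : 0 < d, hde : d * e = m, hcop : IsCoprime d e⟩
    have hsum : Odd (d + e) := by
      have hde2 : Even d ∨ Even e := Int.even_mul.mp (hde ▸ hm)
      have hnot : ¬(2 ∣ d ∧ 2 ∣ e) := fun h =>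
        Int.prime_two.not_isUnit (hcop.isUnit_of_dvd' h.1 h.2)
      rw [even_iff_two_dvd, even_iff_two_dvd] at hde2
      rw [Int.odd_iff]
      omega
    have h2 : IsCoprime 2 (d + e) := Int.isCoprime_two_left.mpr hsum
    have hd' : IsCoprime d (d + e) := by simpa [add_comm] using hcop.add_mul_left_right 1
    have h4d : IsCoprime (4 * d) (d + e) := (h2.mul_left h2).mul_left hd'
    exact ⟨⟨4 * d, 4 * d, d + e, by omega, Or.inr rfl, by rw [← hde]; ring, h4d⟩,
      by simp [diagonal, hd.ne'], by simp⟩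

lemma emod_of_b_ne_zero {m : ℤ} {f : AmbiguousForm (-4 * m)} (hf : f.b ≠ 0) :
    m % 4 = 1 ∨ m % 8 = 0 := by
  obtain ⟨e, -, -, -, hem, hc, -⟩ := exists_a_eq_two_mul hf
  rcases Int.even_or_odd e with he | he
  · obtain ⟨n, rfl⟩ := even_iff_two_dvd.mp he
    obtain ⟨k, hk⟩ : 2 ∣ n * (f.c - n) := even_iff_two_dvd.mp <| by
      rw [Int.even_mul, Int.even_sub', iff_true_left hc]
      exact Int.even_or_odd n
    have : m = 8 * k := by linarith
    omega
  · have hsum := add_emod_four_of_odd_mul (he.mul ((even_two_mul f.c).sub_odd he))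
    rw [Int.odd_iff] at hc
    omega

lemma compl_diagonal_eq_empty {m : ℤ} (hm : ¬(m % 4 = 1 ∨ m % 8 = 0)) :
    (diagonal (-4 * m))ᶜ = ∅ :=
  Set.eq_empty_of_forall_notMem fun _ hf => hm (emod_of_b_ne_zero hf)

lemma card_of_odd (hD : D < 0) (hD4 : D % 4 = 1) :
    Nat.card (AmbiguousForm D) = 2 ^ D.natAbs.primeFactors.card := by
  have := finite hD.ne
  rw [← Set.ncard_add_ncard_compl (diagonal D), ncard_compl_diagonal_of_odd hD4,
    diagonal_eq_empty hD4, Set.ncard_empty, ncard_coprimeFactorizations (by omega), Int.natAbs_neg,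
    zero_add]

lemma card_neg_four_mul {m : ℤ} (hm : 0 < m) :
    Nat.card (AmbiguousForm (-4 * m)) =
      2 ^ (m.natAbs.primeFactors.card + if m % 4 = 1 ∨ m % 8 = 0 then 1 else 0) := by
  have := finite (show -4 * m ≠ 0 by omega)
  rw [← Set.ncard_add_ncard_compl (diagonal (-4 * m)), ncard_diagonal,
    ncard_coprimeFactorizations hm]
  split_ifs with h
  · suffices (diagonal (-4 * m))ᶜ.ncard = 2 ^ m.natAbs.primeFactors.card by rw [this]; ring
    rcases h with h | h
    · rw [ncard_compl_diagonal_of_emod_four_eq_one h, ncard_coprimeFactorizations hm]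
    · obtain ⟨n, rfl⟩ : ∃ n, m = 4 * (2 * n) := ⟨m / 8, by omega⟩
      rw [ncard_compl_diagonal_of_even (even_two_mul n), ncard_coprimeFactorizations (by omega),
        primeFactors_natAbs_four_mul (by omega), Finset.insert_eq_of_mem]
      exact two_mem_primeFactors_natAbs.mpr ⟨by omega, by omega⟩
  · rw [compl_diagonal_eq_empty h, Set.ncard_empty, add_zero, add_zero]

lemma card_eq_two_pow (hD : D < 0) (hD4 : D % 4 = 0 ∨ D % 4 = 1) :
    Nat.card (AmbiguousForm D) = 2 ^ numAssignedCharacters D := by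
  rw [numAssignedCharacters]
  rcases hD4 with h | h
  · obtain ⟨m, rfl⟩ : ∃ m, D = -4 * m := ⟨-(D / 4), by omega⟩
    have hm : 0 < m := by omega
    rw [card_neg_four_mul hm, neg_mul, Int.natAbs_neg, primeFactors_natAbs_four_mul hm.ne',
      Finset.erase_insert_eq_erase]
    by_cases h2 : 2 ∈ m.natAbs.primeFactors
    · rw [← Finset.card_erase_add_one h2]
      rw [two_mem_primeFactors_natAbs] at h2
      congr 1
      split_ifs <;> omega
    · rw [Finset.erase_eq_of_notMem h2]
      rw [two_mem_primeFactors_natAbs] at h2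
      congr 1
      split_ifs <;> omega
  · rw [card_of_odd hD h, if_pos (Or.inl h), Finset.erase_eq_of_notMem, add_zero]
    rw [two_mem_primeFactors_natAbs]
    omega

end AmbiguousForm

section InvertibleIdeal

variable {R : Type*} [CommRing R] {I J K : Ideal R}

/-- An ideal is invertible if it is a unit in the monoid of fractional ideals. -/
def IsInvertibleIdeal (I : Ideal R) : Prop :=
  IsUnit (I : FractionalIdeal R⁰ (FractionRing R))

lemma isInvertibleIdeal_mul :
    IsInvertibleIdeal (I * J) ↔ IsInvertibleIdeal I ∧ IsInvertibleIdeal J := by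
  rw [IsInvertibleIdeal, FractionalIdeal.coeIdeal_mul]
  exact IsUnit.mul_iff

namespace IsInvertibleIdeal

lemma mul_le_mul_right_iff (hI : IsInvertibleIdeal I) : J * I ≤ K * I ↔ J ≤ K := by
  refine ⟨fun h => ?_, fun h => Ideal.mul_mono_left h⟩
  obtain ⟨u, hu⟩ := hI
  rw [← FractionalIdeal.coeIdeal_le_coeIdeal (FractionRing R), FractionalIdeal.coeIdeal_mul,
    FractionalIdeal.coeIdeal_mul, ← hu] at h
  have := mul_le_mul_left h (↑u⁻¹ : FractionalIdeal R⁰ (FractionRing R))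
  rwa [u.mul_inv_cancel_right, u.mul_inv_cancel_right, FractionalIdeal.coeIdeal_le_coeIdeal] at this

lemma mul_right_cancel (hI : IsInvertibleIdeal I) (h : J * I = K * I) : J = K :=
  le_antisymm (hI.mul_le_mul_right_iff.mp h.le) (hI.mul_le_mul_right_iff.mp h.ge)

end IsInvertibleIdeal

variable [IsDomain R]

lemma isInvertibleIdeal_span_singleton {x : R} (hx : x ≠ 0) :
    IsInvertibleIdeal (Ideal.span {x}) := by
  have hx : algebraMap R (FractionRing R) x ≠ 0 := by simpa using hx
  rw [IsInvertibleIdeal, FractionalIdeal.coeIdeal_span_singleton]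
  exact ⟨toPrincipalIdeal R (FractionRing R) (Units.mk0 _ hx), by simp⟩

namespace IsInvertibleIdeal

lemma ne_bot (hI : IsInvertibleIdeal I) : I ≠ ⊥ := by
  rintro rfl
  simp [IsInvertibleIdeal] at hI

/-- The class of an invertible ideal in the class group. -/
noncomputable def toClassGroup (hI : IsInvertibleIdeal I) : ClassGroup R :=
  ClassGroup.mk (FractionRing R) (IsUnit.unit hI)

lemma toClassGroup_eq_iff (hI : IsInvertibleIdeal I) (hJ : IsInvertibleIdeal J) :
    hI.toClassGroup = hJ.toClassGroup ↔
      ∃ x y : R, x ≠ 0 ∧ y ≠ 0 ∧ Ideal.span {x} * I = Ideal.span {y} * J :=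
  ClassGroup.mk_eq_mk_of_coe_ideal (IsUnit.unit_spec hI) (IsUnit.unit_spec hJ)

lemma toClassGroup_sq_eq_one_iff (hI : IsInvertibleIdeal I) :
    hI.toClassGroup ^ 2 = 1 ↔ ∃ x : R, x ≠ 0 ∧ I * I = Ideal.span {x} := by
  rw [toClassGroup, ← map_pow]
  exact ClassGroup.mk_eq_one_of_coe_ideal (by simp [sq, IsUnit.unit_spec hI])

end IsInvertibleIdeal

lemma exists_toClassGroup_eq (c : ClassGroup R) :
    ∃ (I : Ideal R) (hI : IsInvertibleIdeal I), hI.toClassGroup = c := by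
  refine ClassGroup.induction (FractionRing R) (fun I => ?_) c
  have hnum : IsInvertibleIdeal (I : FractionalIdeal R⁰ (FractionRing R)).num :=
    FractionalIdeal.isUnit_num.mpr I.isUnit
  have hden : algebraMap R (FractionRing R) I.1.den ≠ 0 :=
    IsFractionRing.to_map_ne_zero_of_mem_nonZeroDivisors (SetLike.coe_mem _)
  refine ⟨_, hnum, (ClassGroup.mk_eq_mk.mpr ⟨Units.mk0 _ hden, Units.ext ?_⟩).symm⟩
  rw [mul_comm, Units.val_mul, coe_toPrincipalIdeal, Units.val_mk0]
  exact FractionalIdeal.den_mul_self_eq_num' R⁰ (FractionRing R) I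

end InvertibleIdeal

section ConjIdeal

variable {R : Type*} [CommRing R] [StarRing R]

/-- The conjugate ideal `{star z | z ∈ I}`. -/
def conjIdeal (I : Ideal R) : Ideal R :=
  I.map (starRingEnd R)

lemma star_mem_conjIdeal {I : Ideal R} {z : R} (hz : z ∈ I) : star z ∈ conjIdeal I :=
  Ideal.mem_map_of_mem (starRingEnd R) hz

lemma conjIdeal_mul (I J : Ideal R) : conjIdeal (I * J) = conjIdeal I * conjIdeal J :=
  Ideal.map_mul _ I J

lemma conjIdeal_span_singleton (x : R) : conjIdeal (Ideal.span {x}) = Ideal.span {star x} := by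
  rw [conjIdeal, Ideal.map_span, Set.image_singleton, starRingEnd_apply]

lemma conjIdeal_conjIdeal (I : Ideal R) : conjIdeal (conjIdeal I) = I := by
  rw [conjIdeal, conjIdeal, Ideal.map_map]
  convert Ideal.map_id I
  ext x
  exact star_star x

end ConjIdeal

section QuadraticRing

lemma four_mul_norm {R : Type*} [CommRing R] {p t : R} (z : QuadraticAlgebra R p t) :
    4 * z.norm = z.trace ^ 2 - (t ^ 2 + 4 * p) * z.im ^ 2 := by
  rw [QuadraticAlgebra.norm_def, QuadraticAlgebra.trace_def]
  ring

lemma disc_emod_four (p t : ℤ) : (t ^ 2 + 4 * p) % 4 = 0 ∨ (t ^ 2 + 4 * p) % 4 = 1 := by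
  rcases Int.even_or_odd t with ⟨n, rfl⟩ | ht
  · left
    ring_nf
    omega
  · have := Int.sq_mod_four_eq_one_of_odd ht
    omega

variable {p t : ℤ}

variable [hD : Fact (t ^ 2 + 4 * p < 0)]

lemma norm_pos_of_ne_zero {z : QuadraticAlgebra ℤ p t} (hz : z ≠ 0) : 0 < z.norm := by
  have hD := hD.out
  have h4 := four_mul_norm z
  by_cases him : z.im = 0
  · have hre : z.re ≠ 0 := fun hre => hz (QuadraticAlgebra.ext hre him)
    simpa [QuadraticAlgebra.norm_def, him] using mul_self_pos.mpr hre
  · have := mul_pos (neg_pos.mpr hD) (pow_pos (abs_pos.mpr him) 2)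
    rw [sq_abs] at this
    nlinarith [sq_nonneg z.trace]

instance : IsDomain (QuadraticAlgebra ℤ p t) := by
  have : NoZeroDivisors (QuadraticAlgebra ℤ p t) := ⟨fun {x y} hxy => by
    by_contra! h
    have := mul_pos (norm_pos_of_ne_zero h.1) (norm_pos_of_ne_zero h.2)
    rw [← map_mul, hxy, QuadraticAlgebra.norm_zero] at this
    exact this.false⟩
  exact NoZeroDivisors.to_isDomain _

lemma norm_eq_one_of_isUnit {u : QuadraticAlgebra ℤ p t} (hu : IsUnit u) : u.norm = 1 := by
  have hnorm := Int.isUnit_iff.mp (QuadraticAlgebra.isUnit_iff_norm_isUnit.mp hu)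
  have := norm_pos_of_ne_zero hu.ne_zero
  omega

lemma mul_star_eq_one_of_isUnit {u : QuadraticAlgebra ℤ p t} (hu : IsUnit u) : u * star u = 1 := by
  rw [← QuadraticAlgebra.algebraMap_norm_eq_mul_star, norm_eq_one_of_isUnit hu, map_one]

lemma trace_ne_zero_of_isUnit (hD4 : t ^ 2 + 4 * p ≠ -4) {u : QuadraticAlgebra ℤ p t}
    (hu : IsUnit u) : u.trace ≠ 0 := by
  intro h0
  have h4 := four_mul_norm u
  rw [norm_eq_one_of_isUnit hu, h0] at h4
  have him : 0 < u.im ^ 2 := sq_pos_of_ne_zero fun him => by simp [him] at h4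
  have hD := hD.out
  have hD_emod := disc_emod_four p t
  generalize t ^ 2 + 4 * p = D at *
  have : -4 ≤ D := by nlinarith
  obtain rfl : D = -3 := by omega
  omega

lemma abs_trace_eq_of_isUnit (hD4 : t ^ 2 + 4 * p ≠ -4) {u : QuadraticAlgebra ℤ p t}
    (hu : IsUnit u) : |u.trace| = 1 ∨ |u.trace| = 2 := by
  have hD := hD.out
  have h4 := four_mul_norm u
  rw [norm_eq_one_of_isUnit hu] at h4
  have hle : |u.trace| ≤ 2 := abs_le_of_sq_le_sq (by nlinarith [sq_nonneg u.im]) two_pos.le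
  have hpos := abs_pos.mpr (trace_ne_zero_of_isUnit hD4 hu)
  omega

/-- A unit of trace `±1` is a sixth root of unity, and a unit of trace `±2` is `±1`. In discriminant
`-4` the statement fails for `i`, which has trace `0`. -/
lemma exists_isUnit_eq_sq_or_eq_neg_sq (hD4 : t ^ 2 + 4 * p ≠ -4) {u : QuadraticAlgebra ℤ p t}
    (hu : IsUnit u) : ∃ v : QuadraticAlgebra ℤ p t, IsUnit v ∧ (u = v ^ 2 ∨ u = -v ^ 2) := by
  have hsq : u ^ 2 = u.trace * u - 1 := by
    simpa [norm_eq_one_of_isUnit hu] using QuadraticAlgebra.sq_eq_trace_smul_sub_norm u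
  rcases abs_trace_eq_of_isUnit hD4 hu with h | h
  · rcases eq_or_eq_neg_of_abs_eq h with h | h <;> rw [h] at hsq
    · have hv : u = -(1 - u) ^ 2 := by push_cast at hsq; linear_combination hsq
      refine ⟨1 - u, ?_, Or.inr hv⟩
      rwa [hv, IsUnit.neg_iff, isUnit_pow_iff two_ne_zero] at hu
    · have hv : u = (1 + u) ^ 2 := by linear_combination -hsq
      refine ⟨1 + u, ?_, Or.inl hv⟩
      rwa [hv, isUnit_pow_iff two_ne_zero] at hu
  · refine ⟨1, isUnit_one, ?_⟩
    rw [one_pow]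
    rcases eq_or_eq_neg_of_abs_eq h with h | h <;> rw [h] at hsq
    · left
      have : (u - 1) ^ 2 = 0 := by linear_combination hsq
      exact sub_eq_zero.mp (pow_eq_zero_iff two_ne_zero |>.mp this)
    · right
      have : (u + 1) ^ 2 = 0 := by linear_combination hsq
      exact eq_neg_of_add_eq_zero_left (pow_eq_zero_iff two_ne_zero |>.mp this)

end QuadraticRing

section FormIdeal

lemma span_pair_mul_span_pair_eq_span_singleton {R : Type*} [CommRing R] {a b b' c : R}
    (hbb' : b * b' = a * c) (htop : Ideal.span {a, b + b', c} = ⊤) :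
    Ideal.span {a, b} * Ideal.span {a, b'} = Ideal.span {a} := by
  have hle : Ideal.span {a, b + b', c} ≤ Ideal.span {a, b', b, c} := by
    simp only [Ideal.span_le, Set.insert_subset_iff, Set.singleton_subset_iff, SetLike.mem_coe]
    exact ⟨Ideal.subset_span (by simp),
      add_mem (Ideal.subset_span (by simp)) (Ideal.subset_span (by simp)),
      Ideal.subset_span (by simp)⟩
  calc Ideal.span {a, b} * Ideal.span {a, b'}
      = Ideal.span {a * a, a * b', a * b, a * c} := by
        rw [Ideal.span_pair_mul_span_pair, hbb', mul_comm b]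
    _ = Ideal.span {a} * Ideal.span {a, b', b, c} := by
        rw [Ideal.span_mul_span', Set.singleton_mul]
        simp only [Set.image_insert_eq, Set.image_singleton]
    _ = Ideal.span {a} := by
        rw [eq_top_iff.mpr (htop.ge.trans hle), Ideal.mul_top]

variable {p t a k c : ℤ}

/-- The element `ω + k`, whose minimal polynomial is `X ^ 2 - (t + 2 * k) * X +
(k ^ 2 + t * k - p)`. -/
@[simps]
def omegaAdd (p t k : ℤ) : QuadraticAlgebra ℤ p t :=
  ⟨k, 1⟩

lemma star_omegaAdd :
    star (omegaAdd p t k) = ((t + 2 * k : ℤ) : QuadraticAlgebra ℤ p t) - omegaAdd p t k := by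
  ext
  · rw [QuadraticAlgebra.re_star, QuadraticAlgebra.re_sub, QuadraticAlgebra.re_intCast, Int.cast_id,
      re_omegaAdd, im_omegaAdd]
    ring
  · rw [QuadraticAlgebra.im_star, QuadraticAlgebra.im_sub, QuadraticAlgebra.im_intCast]
    simp

lemma omegaAdd_mul_star :
    omegaAdd p t k * star (omegaAdd p t k) =
      ((k ^ 2 + t * k - p : ℤ) : QuadraticAlgebra ℤ p t) := by
  rw [← QuadraticAlgebra.algebraMap_norm_eq_mul_star, QuadraticAlgebra.norm_def, eq_intCast]
  congr 1
  rw [re_omegaAdd, im_omegaAdd]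
  ring

/-- The ideal `ℤ a + ℤ (ω + k)` attached to the binary quadratic form
`a x² + (t + 2 k) x y + c y²` of discriminant `t² + 4 p`. The coefficient `c` is determined by
`a * c = k ^ 2 + t * k - p`. -/
def formIdeal (p t a k : ℤ) : Ideal (QuadraticAlgebra ℤ p t) :=
  Ideal.span {(a : QuadraticAlgebra ℤ p t), omegaAdd p t k}

lemma intCast_mem_formIdeal : (a : QuadraticAlgebra ℤ p t) ∈ formIdeal p t a k :=
  Ideal.subset_span (Set.mem_insert _ _)

lemma omegaAdd_mem_formIdeal : omegaAdd p t k ∈ formIdeal p t a k :=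
  Ideal.subset_span (Set.mem_insert_of_mem _ rfl)

lemma mem_formIdeal (h : a ∣ k ^ 2 + t * k - p) {z : QuadraticAlgebra ℤ p t} :
    z ∈ formIdeal p t a k ↔ a ∣ z.re - k * z.im := by
  obtain ⟨c, hc⟩ := h
  refine ⟨fun hz => ?_, fun ⟨i, hi⟩ => ?_⟩
  · obtain ⟨x, y, rfl⟩ := Ideal.mem_span_pair.mp hz
    refine ⟨x.re - k * x.im - c * y.im, ?_⟩
    simp only [QuadraticAlgebra.re_add, QuadraticAlgebra.re_mul, QuadraticAlgebra.im_add,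
      QuadraticAlgebra.im_mul, QuadraticAlgebra.re_intCast, QuadraticAlgebra.im_intCast,
      Int.cast_eq, re_omegaAdd, im_omegaAdd]
    linear_combination -y.im * hc
  · refine Ideal.mem_span_pair.mpr ⟨i, z.im, ?_⟩
    ext
    · simp only [QuadraticAlgebra.re_add, QuadraticAlgebra.re_mul, QuadraticAlgebra.re_intCast,
        QuadraticAlgebra.im_intCast, Int.cast_eq, re_omegaAdd, im_omegaAdd]
      linear_combination -hi
    · simp

lemma formIdeal_eq_of_dvd_sub {k' : ℤ} (h : a ∣ k' - k) :
    formIdeal p t a k = formIdeal p t a k' := by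
  obtain ⟨m, hm⟩ := h
  have : omegaAdd p t k' = omegaAdd p t k + m * (a : QuadraticAlgebra ℤ p t) := by
    ext
    · simp only [QuadraticAlgebra.re_add, QuadraticAlgebra.re_mul, QuadraticAlgebra.re_intCast,
        QuadraticAlgebra.im_intCast, Int.cast_eq, re_omegaAdd]
      linear_combination hm
    · simp
  rw [formIdeal, formIdeal, this, Ideal.span_pair_add_mul_left]

lemma conjIdeal_formIdeal :
    conjIdeal (formIdeal p t a k) =
      Ideal.span {(a : QuadraticAlgebra ℤ p t), star (omegaAdd p t k)} := by
  rw [conjIdeal, formIdeal, Ideal.map_span, Set.image_pair, starRingEnd_apply, starRingEnd_apply,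
    star_intCast]

lemma conjIdeal_formIdeal_eq_self_iff (h : a ∣ k ^ 2 + t * k - p) :
    conjIdeal (formIdeal p t a k) = formIdeal p t a k ↔ a ∣ t + 2 * k := by
  have hstar : star (omegaAdd p t k) ∈ formIdeal p t a k ↔ a ∣ t + 2 * k := by
    rw [mem_formIdeal h, QuadraticAlgebra.re_star, QuadraticAlgebra.im_star, re_omegaAdd,
      im_omegaAdd]
    ring_nf
  refine ⟨fun hI => hstar.mp (hI.le (star_mem_conjIdeal omegaAdd_mem_formIdeal)), fun hdvd => ?_⟩
  have hle : conjIdeal (formIdeal p t a k) ≤ formIdeal p t a k := by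
    rw [conjIdeal_formIdeal, Ideal.span_le, Set.insert_subset_iff, Set.singleton_subset_iff]
    exact ⟨intCast_mem_formIdeal, hstar.mpr hdvd⟩
  refine le_antisymm hle ?_
  conv_lhs => rw [← conjIdeal_conjIdeal (formIdeal p t a k)]
  exact Ideal.map_mono hle

lemma formIdeal_mul_conjIdeal (h : a * c = k ^ 2 + t * k - p)
    (hprim : Ideal.span {a, t + 2 * k, c} = ⊤) :
    formIdeal p t a k * conjIdeal (formIdeal p t a k) =
      Ideal.span {(a : QuadraticAlgebra ℤ p t)} := by
  rw [conjIdeal_formIdeal, formIdeal]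
  apply span_pair_mul_span_pair_eq_span_singleton (c := (c : QuadraticAlgebra ℤ p t))
  · rw [omegaAdd_mul_star, ← h, Int.cast_mul]
  · rw [star_omegaAdd, add_sub_cancel]
    have := congrArg (Ideal.map (Int.castRingHom (QuadraticAlgebra ℤ p t))) hprim
    simpa only [Ideal.map_span, Set.image_insert_eq, Set.image_singleton, eq_intCast,
      Ideal.map_top] using this

lemma span_eq_top_of_isInvertibleIdeal_formIdeal (h : a * c = k ^ 2 + t * k - p)
    (hI : IsInvertibleIdeal (formIdeal p t a k)) : Ideal.span {a, t + 2 * k, c} = ⊤ := by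
  set J : Ideal (QuadraticAlgebra ℤ p t) := Ideal.span {(a : QuadraticAlgebra ℤ p t),
    ((t + 2 * k : ℤ) : QuadraticAlgebra ℤ p t), (c : QuadraticAlgebra ℤ p t)}
  have ha : (a : QuadraticAlgebra ℤ p t) ∈ J := Ideal.subset_span (by simp)
  have htk : ((t + 2 * k : ℤ) : QuadraticAlgebra ℤ p t) ∈ J := Ideal.subset_span (by simp)
  have hc : (c : QuadraticAlgebra ℤ p t) ∈ J := Ideal.subset_span (by simp)
  have homega_sq : omegaAdd p t k * omegaAdd p t k =
      (t + 2 * k : ℤ) * omegaAdd p t k - c * (a : QuadraticAlgebra ℤ p t) := by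
    have hnorm := omegaAdd_mul_star (p := p) (t := t) (k := k)
    rw [star_omegaAdd, ← h, Int.cast_mul] at hnorm
    linear_combination -hnorm
  have hle : Ideal.span {omegaAdd p t k} * formIdeal p t a k ≤ J * formIdeal p t a k := by
    conv_lhs => rw [formIdeal, Ideal.span_mul_span', Set.singleton_mul, Set.image_pair]
    rw [Ideal.span_le, Set.insert_subset_iff, Set.singleton_subset_iff, homega_sq,
      mul_comm _ (a : QuadraticAlgebra ℤ p t)]
    exact ⟨Ideal.mul_mem_mul ha omegaAdd_mem_formIdeal,
      sub_mem (Ideal.mul_mem_mul htk omegaAdd_mem_formIdeal)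
        (Ideal.mul_mem_mul hc intCast_mem_formIdeal)⟩
  have homega : omegaAdd p t k ∈ J :=
    (Ideal.span_singleton_le_iff_mem _).mp (hI.mul_le_mul_right_iff.mp hle)
  obtain ⟨x, y, z, hxyz⟩ := Submodule.mem_span_triple.mp homega
  refine (Ideal.eq_top_iff_one _).mpr (Submodule.mem_span_triple.mpr ⟨x.im, y.im, z.im, ?_⟩)
  simpa using congrArg QuadraticAlgebra.im hxyz

end FormIdeal

section IdealStructure

variable {p t : ℤ}

lemma exists_pos_eq_span_singleton {K : Ideal ℤ} (hK : K ≠ ⊥) :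
    ∃ n : ℤ, 0 < n ∧ K = Ideal.span {n} := by
  obtain ⟨n, rfl⟩ := (IsPrincipalIdealRing.principal K).principal
  refine ⟨|n|, abs_pos.mpr ?_, ?_⟩
  · rintro rfl
    exact hK (Ideal.span_singleton_eq_bot.mpr rfl)
  · exact (Ideal.span_singleton_abs n).symm

lemma exists_eq_span_mul_formIdeal_of_generators {I : Ideal (QuadraticAlgebra ℤ p t)} {n : ℤ}
    {β : QuadraticAlgebra ℤ p t} (hn : 0 < n)
    (hI : ∀ m : ℤ, (m : QuadraticAlgebra ℤ p t) ∈ I ↔ n ∣ m) (hβ_pos : 0 < β.im) (hβ : β ∈ I)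
    (him : ∀ z ∈ I, β.im ∣ z.im) :
    ∃ g a k c : ℤ, 0 < g ∧ 0 < a ∧ a * c = k ^ 2 + t * k - p ∧
      I = Ideal.span {(g : QuadraticAlgebra ℤ p t)} * formIdeal p t a k := by
  have hnI : (n : QuadraticAlgebra ℤ p t) ∈ I := (hI n).mpr dvd_rfl
  obtain ⟨a, ha⟩ : β.im ∣ n := by
    simpa using him _ (I.mul_mem_right (omegaAdd p t 0) hnI)
  obtain ⟨k, hk⟩ : β.im ∣ β.re := by
    simpa [mul_comm t] using him _ (I.mul_mem_right (omegaAdd p t (-t)) hβ)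
  set g := β.im with hg
  have hβ_eq : β = g * omegaAdd p t k := by
    ext <;> simp [hk, hg]
  have ha_pos : 0 < a := pos_of_mul_pos_right (ha ▸ hn) hβ_pos.le
  obtain ⟨c, hc⟩ : a ∣ k ^ 2 + t * k - p := by
    have hmem : ((g * (k ^ 2 + t * k - p) : ℤ) : QuadraticAlgebra ℤ p t) ∈ I := by
      rw [Int.cast_mul, ← omegaAdd_mul_star, ← mul_assoc, ← hβ_eq]
      exact I.mul_mem_right _ hβ
    rwa [hI, ha, mul_dvd_mul_iff_left hβ_pos.ne'] at hmem
  refine ⟨g, a, k, c, hβ_pos, ha_pos, hc.symm, le_antisymm (fun z hz => ?_) ?_⟩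
  · obtain ⟨j, hj⟩ := him z hz
    obtain ⟨i, hi⟩ : n ∣ z.re - j * β.re := by
      rw [← hI]
      convert I.sub_mem hz (I.mul_mem_left (j : QuadraticAlgebra ℤ p t) hβ) using 1
      ext <;> simp [hj, hg, mul_comm]
    rw [Ideal.mem_span_singleton_mul]
    refine ⟨i * a + j * omegaAdd p t k, add_mem (Ideal.mul_mem_left _ _ intCast_mem_formIdeal)
      (Ideal.mul_mem_left _ _ omegaAdd_mem_formIdeal), ?_⟩
    rw [mul_add, mul_left_comm _ (j : QuadraticAlgebra ℤ p t), ← hβ_eq, mul_left_comm,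
      ← Int.cast_mul g a, ← ha]
    ext
    · simp only [QuadraticAlgebra.re_add, QuadraticAlgebra.re_mul, QuadraticAlgebra.re_intCast,
        QuadraticAlgebra.im_intCast, Int.cast_eq]
      linear_combination -hi
    · simp [hj, hg, mul_comm]
  · rw [formIdeal, Ideal.span_mul_span', Set.singleton_mul, Set.image_pair, Ideal.span_le,
      Set.insert_subset_iff, Set.singleton_subset_iff, ← hβ_eq, ← Int.cast_mul, ← ha]
    exact ⟨hnI, hβ⟩

variable [Fact (t ^ 2 + 4 * p < 0)]

theorem exists_eq_span_mul_formIdeal {I : Ideal (QuadraticAlgebra ℤ p t)} (hI : I ≠ ⊥) :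
    ∃ g a k c : ℤ, 0 < g ∧ 0 < a ∧ a * c = k ^ 2 + t * k - p ∧
      I = Ideal.span {(g : QuadraticAlgebra ℤ p t)} * formIdeal p t a k := by
  obtain ⟨z, hz, hz0⟩ := Submodule.exists_mem_ne_zero_of_ne_bot hI
  have hnorm : (z.norm : QuadraticAlgebra ℤ p t) ∈ I := by
    have := I.mul_mem_right (star z) hz
    rwa [← QuadraticAlgebra.algebraMap_norm_eq_mul_star, eq_intCast] at this
  have hnorm_pos := norm_pos_of_ne_zero hz0
  let ints : Ideal ℤ := I.comap (Int.castRingHom _)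
  let ims : Ideal ℤ := Submodule.map (QuadraticAlgebra.imₗ p t) (I.restrictScalars ℤ)
  have mem_ims {m : ℤ} : m ∈ ims ↔ ∃ z ∈ I, z.im = m := by simp [ims, Submodule.mem_map]
  obtain ⟨n, hn, hints⟩ : ∃ n : ℤ, 0 < n ∧ ints = Ideal.span {n} :=
    exists_pos_eq_span_singleton fun h =>
      hnorm_pos.ne' (Ideal.mem_bot.mp (h ▸ (show z.norm ∈ ints from hnorm)))
  obtain ⟨g, hg, hims⟩ : ∃ g : ℤ, 0 < g ∧ ims = Ideal.span {g} := by
    refine exists_pos_eq_span_singleton fun h => hnorm_pos.ne' (Ideal.mem_bot.mp ?_)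
    rw [← h, mem_ims]
    exact ⟨_, I.mul_mem_right (omegaAdd p t 0) hnorm, by simp⟩
  obtain ⟨β, hβ, rfl⟩ := mem_ims.mp (hims ▸ Ideal.mem_span_singleton_self g)
  refine exists_eq_span_mul_formIdeal_of_generators hn (fun m => ?_) hg hβ fun z hz => ?_
  · rw [← Ideal.mem_span_singleton, ← hints]
    rfl
  · rw [← Ideal.mem_span_singleton, ← hims]
    exact mem_ims.mpr ⟨z, hz, rfl⟩

lemma IsInvertibleIdeal.exists_mul_conjIdeal_eq {I : Ideal (QuadraticAlgebra ℤ p t)}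
    (hI : IsInvertibleIdeal I) :
    ∃ n : ℤ, 0 < n ∧ I * conjIdeal I = Ideal.span {(n : QuadraticAlgebra ℤ p t)} := by
  obtain ⟨g, a, k, c, hg, ha, hac, rfl⟩ := exists_eq_span_mul_formIdeal hI.ne_bot
  have hprim := span_eq_top_of_isInvertibleIdeal_formIdeal hac (isInvertibleIdeal_mul.mp hI).2
  refine ⟨g * g * a, by positivity, ?_⟩
  rw [conjIdeal_mul, conjIdeal_span_singleton, star_intCast, mul_mul_mul_comm,
    formIdeal_mul_conjIdeal hac hprim, Ideal.span_singleton_mul_span_singleton,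
    Ideal.span_singleton_mul_span_singleton]
  push_cast
  rfl

end IdealStructure

namespace AmbiguousForm

variable {p t : ℤ}

/-- The integer `k` for which `formIdeal p t f.a k` is the ideal of the form `f`. -/
def shift (f : AmbiguousForm (t ^ 2 + 4 * p)) : ℤ :=
  (f.b - t) / 2

/-- The ideal of `ℤ[ω]` attached to an ambiguous form. -/
def toIdeal (f : AmbiguousForm (t ^ 2 + 4 * p)) : Ideal (QuadraticAlgebra ℤ p t) :=
  formIdeal p t f.a f.shift

lemma add_two_mul_shift (f : AmbiguousForm (t ^ 2 + 4 * p)) : t + 2 * f.shift = f.b := by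
  have h2 : 2 ∣ (f.b - t) * (f.b + t) := ⟨2 * (f.a * f.c + p), by linear_combination f.disc⟩
  have : 2 ∣ f.b - t := by
    rcases Int.prime_two.dvd_or_dvd h2 with h | h <;> omega
  rw [shift]
  omega

lemma a_mul_c (f : AmbiguousForm (t ^ 2 + 4 * p)) : f.a * f.c = f.shift ^ 2 + t * f.shift - p := by
  have h := f.disc
  rw [← f.add_two_mul_shift] at h
  linarith

lemma conjIdeal_toIdeal (f : AmbiguousForm (t ^ 2 + 4 * p)) : conjIdeal f.toIdeal = f.toIdeal :=
  (conjIdeal_formIdeal_eq_self_iff (Dvd.intro _ f.a_mul_c)).mpr (f.add_two_mul_shift ▸ f.a_dvd_b)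

lemma toIdeal_mul_self (f : AmbiguousForm (t ^ 2 + 4 * p)) :
    f.toIdeal * f.toIdeal = Ideal.span {(f.a : QuadraticAlgebra ℤ p t)} := by
  have hprim : Ideal.span {f.a, t + 2 * f.shift, f.c} = ⊤ := by
    obtain ⟨x, y, hxy⟩ := f.coprime
    exact (Ideal.eq_top_iff_one _).mpr (Submodule.mem_span_triple.mpr ⟨x, 0, y, by simpa using hxy⟩)
  have := formIdeal_mul_conjIdeal f.a_mul_c hprim
  rwa [← toIdeal, conjIdeal_toIdeal] at this

lemma dvd_of_span_intCast_mul_toIdeal_eq {f g : AmbiguousForm (t ^ 2 + 4 * p)} {r s : ℤ}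
    (h : Ideal.span {(r : QuadraticAlgebra ℤ p t)} * f.toIdeal =
      Ideal.span {(s : QuadraticAlgebra ℤ p t)} * g.toIdeal) : s ∣ r := by
  have hmem : (r : QuadraticAlgebra ℤ p t) * omegaAdd p t f.shift ∈
      Ideal.span {(s : QuadraticAlgebra ℤ p t)} * g.toIdeal := by
    rw [← h]
    exact Ideal.mul_mem_mul (Ideal.mem_span_singleton_self _) omegaAdd_mem_formIdeal
  obtain ⟨w, -, hw⟩ := Ideal.mem_span_singleton_mul.mp hmem
  exact ⟨w.im, by simpa using (congrArg QuadraticAlgebra.im hw).symm⟩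

lemma exists_toIdeal_eq_formIdeal {a k c : ℤ} (ha : 0 < a) (hac : a * c = k ^ 2 + t * k - p)
    (hb : t + 2 * k = 0 ∨ t + 2 * k = a) (hI : IsInvertibleIdeal (formIdeal p t a k)) :
    ∃ f : AmbiguousForm (t ^ 2 + 4 * p), f.toIdeal = formIdeal p t a k := by
  have hprim := span_eq_top_of_isInvertibleIdeal_formIdeal hac hI
  have hcop : IsCoprime a c := by
    obtain ⟨x, y, z, hxyz⟩ := Submodule.mem_span_triple.mp ((Ideal.eq_top_iff_one _).mp hprim)
    simp only [smul_eq_mul] at hxyz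
    rcases hb with h | h
    · exact ⟨x, z, by simpa [h] using hxyz⟩
    · exact ⟨x + y, z, by rw [← hxyz, h]; ring⟩
  refine ⟨⟨a, t + 2 * k, c, ha, hb, by linear_combination -4 * hac, hcop⟩, ?_⟩
  simp [toIdeal, shift]

lemma toIdeal_injective :
    Function.Injective (toIdeal : AmbiguousForm (t ^ 2 + 4 * p) → Ideal _) := by
  intro f g hfg
  have ha : f.a = g.a := by
    have h1 : f.a ∣ g.a := by
      have : (g.a : QuadraticAlgebra ℤ p t) ∈ f.toIdeal := hfg ▸ intCast_mem_formIdeal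
      simpa using (mem_formIdeal (Dvd.intro _ f.a_mul_c)).mp this
    have h2 : g.a ∣ f.a := by
      have : (f.a : QuadraticAlgebra ℤ p t) ∈ g.toIdeal := hfg ▸ intCast_mem_formIdeal
      simpa using (mem_formIdeal (Dvd.intro _ g.a_mul_c)).mp this
    exact Int.dvd_antisymm f.a_pos.le g.a_pos.le h1 h2
  obtain ⟨m, hm⟩ : g.a ∣ f.shift - g.shift := by
    have : omegaAdd p t f.shift ∈ g.toIdeal := hfg ▸ omegaAdd_mem_formIdeal
    simpa using (mem_formIdeal (Dvd.intro _ g.a_mul_c)).mp this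
  refine ext_of_a_b ha (sub_eq_zero.mp (Int.eq_zero_of_abs_lt_dvd (m := 2 * g.a) ⟨m, ?_⟩ ?_))
  · linear_combination 2 * hm - f.add_two_mul_shift + g.add_two_mul_shift
  · have hf := f.b_eq
    have hg := g.b_eq
    have := g.a_pos
    rw [abs_lt]
    omega

variable [Fact (t ^ 2 + 4 * p < 0)]

lemma isInvertibleIdeal_toIdeal (f : AmbiguousForm (t ^ 2 + 4 * p)) :
    IsInvertibleIdeal f.toIdeal := by
  refine (isInvertibleIdeal_mul (J := f.toIdeal)).mp ?_ |>.1
  rw [toIdeal_mul_self]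
  exact isInvertibleIdeal_span_singleton (by exact_mod_cast f.a_pos.ne')

lemma eq_of_span_intCast_mul_toIdeal_eq {f g : AmbiguousForm (t ^ 2 + 4 * p)} {r s : ℤ}
    (hr : r ≠ 0) (h : Ideal.span {(r : QuadraticAlgebra ℤ p t)} * f.toIdeal =
      Ideal.span {(s : QuadraticAlgebra ℤ p t)} * g.toIdeal) : f = g := by
  have hspan : Ideal.span {(r : QuadraticAlgebra ℤ p t)} =
      Ideal.span {(s : QuadraticAlgebra ℤ p t)} := by
    apply le_antisymm <;> rw [Ideal.span_singleton_le_span_singleton]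
    · exact Int.cast_dvd_cast _ _ (dvd_of_span_intCast_mul_toIdeal_eq h)
    · exact Int.cast_dvd_cast _ _ (dvd_of_span_intCast_mul_toIdeal_eq h.symm)
  rw [← hspan, Ideal.span_singleton_mul_right_inj (by exact_mod_cast hr)] at h
  exact toIdeal_injective h

lemma exists_eq_span_intCast_mul_toIdeal {I : Ideal (QuadraticAlgebra ℤ p t)}
    (hI : IsInvertibleIdeal I) (hconj : conjIdeal I = I) :
    ∃ (n : ℤ) (f : AmbiguousForm (t ^ 2 + 4 * p)), n ≠ 0 ∧
      I = Ideal.span {(n : QuadraticAlgebra ℤ p t)} * f.toIdeal := by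
  obtain ⟨n, a, k, c, hn, ha, hac, rfl⟩ := exists_eq_span_mul_formIdeal hI.ne_bot
  rw [conjIdeal_mul, conjIdeal_span_singleton, star_intCast,
    Ideal.span_singleton_mul_right_inj (by exact_mod_cast hn.ne'),
    conjIdeal_formIdeal_eq_self_iff (Dvd.intro _ hac)] at hconj
  obtain ⟨m, hm⟩ := hconj
  have hk : formIdeal p t a k = formIdeal p t a (k - a * (m / 2)) :=
    formIdeal_eq_of_dvd_sub ⟨-(m / 2), by ring⟩
  obtain ⟨f, hf⟩ := exists_toIdeal_eq_formIdeal ha (k := k - a * (m / 2))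
    (c := c - (m / 2) * (t + 2 * k) + a * (m / 2) ^ 2) (by linear_combination hac)
    (by
      have : t + 2 * (k - a * (m / 2)) = a * (m % 2) := by
        rw [Int.emod_def]
        linear_combination hm
      rcases Int.emod_two_eq_zero_or_one m with h | h <;> simp [this, h])
    (hk ▸ (isInvertibleIdeal_mul.mp hI).2)
  exact ⟨n, f, hn.ne', by rw [hf, hk]⟩

end AmbiguousForm

section AmbiguousClass

variable {p t : ℤ}

/-- The square root `2 ω - t` of the discriminant `t² + 4 p`. -/
@[simps]
def sqrtDisc (p t : ℤ) : QuadraticAlgebra ℤ p t :=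
  ⟨-t, 2⟩

lemma star_sqrtDisc : star (sqrtDisc p t) = -sqrtDisc p t := by
  ext
  · rw [QuadraticAlgebra.re_star, QuadraticAlgebra.re_neg, re_sqrtDisc, im_sqrtDisc]
    ring
  · rw [QuadraticAlgebra.im_star, QuadraticAlgebra.im_neg]

lemma sqrtDisc_ne_zero : sqrtDisc p t ≠ 0 := fun h => by
  simpa using congrArg QuadraticAlgebra.im h

/-- Hilbert's Theorem 90 for `x / n`: the solution `β = n + star x` degenerates only if
`x / n = -1`. -/
lemma exists_mul_eq_mul_star {x : QuadraticAlgebra ℤ p t} {n : ℤ}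
    (hx : x * star x = (n : QuadraticAlgebra ℤ p t) ^ 2) :
    ∃ β : QuadraticAlgebra ℤ p t, β ≠ 0 ∧ x * β = n * star β := by
  by_cases h : (n : QuadraticAlgebra ℤ p t) + star x = 0
  · refine ⟨sqrtDisc p t, sqrtDisc_ne_zero, ?_⟩
    have hxn : x = -n := by
      rw [← star_inj, star_neg, star_intCast]
      exact eq_neg_of_add_eq_zero_right h
    rw [star_sqrtDisc, hxn, neg_mul, mul_neg]
  · refine ⟨n + star x, h, ?_⟩
    rw [star_add, star_intCast, star_star]
    linear_combination hx

variable [Fact (t ^ 2 + 4 * p < 0)]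

lemma mul_star_eq_sq_of_mul_self_eq {I : Ideal (QuadraticAlgebra ℤ p t)}
    {x : QuadraticAlgebra ℤ p t} {n : ℤ} (hx : x ≠ 0) (hII : I * I = Ideal.span {x})
    (hconj : I * conjIdeal I = Ideal.span {(n : QuadraticAlgebra ℤ p t)}) :
    x * star x = (n : QuadraticAlgebra ℤ p t) ^ 2 := by
  have hspan : Ideal.span {algebraMap ℤ (QuadraticAlgebra ℤ p t) x.norm} =
      Ideal.span {algebraMap ℤ (QuadraticAlgebra ℤ p t) (n ^ 2)} := by
    calc Ideal.span {algebraMap ℤ (QuadraticAlgebra ℤ p t) x.norm}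
        = I * I * conjIdeal (I * I) := by
          rw [hII, conjIdeal_span_singleton, Ideal.span_singleton_mul_span_singleton,
            QuadraticAlgebra.algebraMap_norm_eq_mul_star]
      _ = I * conjIdeal I * (I * conjIdeal I) := by rw [conjIdeal_mul, mul_mul_mul_comm]
      _ = Ideal.span {algebraMap ℤ (QuadraticAlgebra ℤ p t) (n ^ 2)} := by
          rw [hconj, Ideal.span_singleton_mul_span_singleton, map_pow, eq_intCast, sq]
  have hnorm : x.norm = n ^ 2 := by
    apply Int.dvd_antisymm (norm_pos_of_ne_zero hx).le (sq_nonneg n) <;>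
      rw [← QuadraticAlgebra.algebraMap_dvd_iff_dvd (a := p) (b := t),
        ← Ideal.span_singleton_le_span_singleton, hspan]
  rw [← QuadraticAlgebra.algebraMap_norm_eq_mul_star, hnorm, eq_intCast, Int.cast_pow]

lemma exists_conjIdeal_span_mul_eq_self {I : Ideal (QuadraticAlgebra ℤ p t)}
    (hI : IsInvertibleIdeal I) {x : QuadraticAlgebra ℤ p t} (hx : x ≠ 0)
    (hII : I * I = Ideal.span {x}) :
    ∃ β : QuadraticAlgebra ℤ p t, β ≠ 0 ∧
      conjIdeal (Ideal.span {β} * I) = Ideal.span {β} * I := by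
  obtain ⟨n, hn, hconj⟩ := hI.exists_mul_conjIdeal_eq
  obtain ⟨β, hβ, hxβ⟩ := exists_mul_eq_mul_star (mul_star_eq_sq_of_mul_self_eq hx hII hconj)
  have hxn : Ideal.span {x} * conjIdeal I = Ideal.span {(n : QuadraticAlgebra ℤ p t)} * I := by
    rw [← hII, mul_assoc, hconj, mul_comm]
  refine ⟨β, hβ, (Ideal.span_singleton_mul_right_inj
    (show (n : QuadraticAlgebra ℤ p t) ≠ 0 by exact_mod_cast hn.ne')).mp ?_⟩
  rw [conjIdeal_mul, conjIdeal_span_singleton, ← mul_assoc, Ideal.span_singleton_mul_span_singleton,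
    ← hxβ, mul_left_comm, ← hxn, ← mul_assoc, Ideal.span_singleton_mul_span_singleton, mul_comm β]

/-- The class of the ideal of an ambiguous form, as a `2`-torsion element of the class group. -/
noncomputable def AmbiguousForm.toTwoTorsion (f : AmbiguousForm (t ^ 2 + 4 * p)) :
    {c : ClassGroup (QuadraticAlgebra ℤ p t) // c ^ 2 = 1} :=
  ⟨f.isInvertibleIdeal_toIdeal.toClassGroup,
    f.isInvertibleIdeal_toIdeal.toClassGroup_sq_eq_one_iff.mpr
      ⟨f.a, by exact_mod_cast f.a_pos.ne', f.toIdeal_mul_self⟩⟩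

lemma AmbiguousForm.toTwoTorsion_eq_iff {f g : AmbiguousForm (t ^ 2 + 4 * p)} :
    f.toTwoTorsion = g.toTwoTorsion ↔ ∃ x y : QuadraticAlgebra ℤ p t, x ≠ 0 ∧ y ≠ 0 ∧
      Ideal.span {x} * f.toIdeal = Ideal.span {y} * g.toIdeal :=
  Subtype.ext_iff.trans (IsInvertibleIdeal.toClassGroup_eq_iff _ _)

theorem AmbiguousForm.toTwoTorsion_surjective :
    Function.Surjective (toTwoTorsion : AmbiguousForm (t ^ 2 + 4 * p) → _) := by
  rintro ⟨c, hc⟩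
  obtain ⟨I, hI, rfl⟩ := exists_toClassGroup_eq c
  obtain ⟨x, hx, hII⟩ := hI.toClassGroup_sq_eq_one_iff.mp hc
  obtain ⟨β, hβ, hconj⟩ := exists_conjIdeal_span_mul_eq_self hI hx hII
  obtain ⟨n, f, hn, hf⟩ := AmbiguousForm.exists_eq_span_intCast_mul_toIdeal
    (isInvertibleIdeal_mul.mpr ⟨isInvertibleIdeal_span_singleton hβ, hI⟩) hconj
  exact ⟨f, Subtype.ext ((IsInvertibleIdeal.toClassGroup_eq_iff _ _).mpr
    ⟨n, β, by exact_mod_cast hn, hβ, hf.symm⟩)⟩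

end AmbiguousClass

section TwoToOne

variable {p t : ℤ}

lemma eq_intCast_of_star_eq_self {w : QuadraticAlgebra ℤ p t} (hw : star w = w) : w = w.re := by
  have him := congrArg QuadraticAlgebra.im hw
  rw [QuadraticAlgebra.im_star] at him
  ext
  · simp
  · rw [QuadraticAlgebra.im_intCast]
    omega

lemma two_mul_eq_of_star_eq_neg {w : QuadraticAlgebra ℤ p t} (hw : star w = -w) :
    2 * w = w.im * sqrtDisc p t := by
  have hre := congrArg QuadraticAlgebra.re hw
  rw [QuadraticAlgebra.re_star, QuadraticAlgebra.re_neg] at hre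
  ext
  · simp only [QuadraticAlgebra.re_mul, QuadraticAlgebra.re_ofNat, QuadraticAlgebra.im_ofNat,
      QuadraticAlgebra.re_intCast, QuadraticAlgebra.im_intCast, Int.cast_eq, re_sqrtDisc]
    linarith
  · simp only [QuadraticAlgebra.im_mul, QuadraticAlgebra.re_ofNat, QuadraticAlgebra.im_ofNat,
      QuadraticAlgebra.re_intCast, QuadraticAlgebra.im_intCast, Int.cast_eq, im_sqrtDisc]
    ring

variable [Fact (t ^ 2 + 4 * p < 0)]

lemma exists_isUnit_star_mul_eq_self_or_neg (hD4 : t ^ 2 + 4 * p ≠ -4) {z : QuadraticAlgebra ℤ p t}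
    (hz : Ideal.span {star z} = Ideal.span {z}) :
    ∃ v : QuadraticAlgebra ℤ p t, IsUnit v ∧ (star (v * z) = v * z ∨ star (v * z) = -(v * z)) := by
  obtain ⟨u, hu⟩ := Ideal.span_singleton_eq_span_singleton.mp hz.symm
  obtain ⟨v, hv, huv⟩ := exists_isUnit_eq_sq_or_eq_neg_sq hD4 u.isUnit
  have hv_norm := mul_star_eq_one_of_isUnit hv
  refine ⟨v, hv, huv.imp (fun huv => ?_) fun huv => ?_⟩ <;> rw [star_mul, ← hu, huv]
  · linear_combination z * v * hv_norm
  · linear_combination -z * v * hv_norm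

namespace AmbiguousForm

variable {f g : AmbiguousForm (t ^ 2 + 4 * p)}

lemma exists_partner (f : AmbiguousForm (t ^ 2 + 4 * p)) :
    ∃ (n : ℤ) (g : AmbiguousForm (t ^ 2 + 4 * p)), n ≠ 0 ∧
      Ideal.span {sqrtDisc p t} * f.toIdeal =
        Ideal.span {(n : QuadraticAlgebra ℤ p t)} * g.toIdeal := by
  refine exists_eq_span_intCast_mul_toIdeal (isInvertibleIdeal_mul.mpr
    ⟨isInvertibleIdeal_span_singleton sqrtDisc_ne_zero, f.isInvertibleIdeal_toIdeal⟩) ?_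
  rw [conjIdeal_mul, conjIdeal_span_singleton, star_sqrtDisc, Ideal.span_singleton_neg,
    conjIdeal_toIdeal]

lemma span_sqrtDisc_ne_span_intCast (hD4 : t ^ 2 + 4 * p ≠ -4) (n : ℤ) :
    Ideal.span {sqrtDisc p t} ≠ Ideal.span {(n : QuadraticAlgebra ℤ p t)} := by
  intro h
  obtain ⟨u, hu⟩ := Ideal.span_singleton_eq_span_singleton.mp h.symm
  have hdisc : t ^ 2 + 4 * p = -n ^ 2 := by
    have := congrArg QuadraticAlgebra.norm hu
    rw [map_mul, norm_eq_one_of_isUnit u.isUnit, QuadraticAlgebra.norm_def,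
      QuadraticAlgebra.norm_def] at this
    simp only [QuadraticAlgebra.re_intCast, QuadraticAlgebra.im_intCast, Int.cast_eq, re_sqrtDisc,
      im_sqrtDisc] at this
    linarith
  have hn : n ∣ 2 := ⟨u.1.im, by simpa using (congrArg QuadraticAlgebra.im hu).symm⟩
  have hmod := disc_emod_four p t
  have := Int.le_of_dvd two_pos hn
  have := Int.le_of_dvd two_pos (neg_dvd.mpr hn)
  rw [hdisc] at hmod hD4
  obtain ⟨hn₁, hn₂⟩ : -2 ≤ n ∧ n ≤ 2 := by omega
  interval_cases n <;> simp_all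

lemma exists_star_eq_self_or_neg (hD4 : t ^ 2 + 4 * p ≠ -4)
    (h : f.toTwoTorsion = g.toTwoTorsion) :
    ∃ (w : QuadraticAlgebra ℤ p t) (n : ℤ), w ≠ 0 ∧ (star w = w ∨ star w = -w) ∧
      Ideal.span {w} * f.toIdeal = Ideal.span {(n : QuadraticAlgebra ℤ p t)} * g.toIdeal := by
  obtain ⟨x, y, hx, hy, hxy⟩ := toTwoTorsion_eq_iff.mp h
  have hz : Ideal.span {x * star y} * f.toIdeal =
      Ideal.span {(y.norm : QuadraticAlgebra ℤ p t)} * g.toIdeal := by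
    rw [← eq_intCast (algebraMap ℤ (QuadraticAlgebra ℤ p t)),
      QuadraticAlgebra.algebraMap_norm_eq_mul_star, mul_comm x, mul_comm y,
      ← Ideal.span_singleton_mul_span_singleton, ← Ideal.span_singleton_mul_span_singleton,
      mul_assoc, hxy, mul_assoc]
  have hz_conj : Ideal.span {star (x * star y)} * f.toIdeal =
      Ideal.span {(y.norm : QuadraticAlgebra ℤ p t)} * g.toIdeal := by
    simpa only [conjIdeal_mul, conjIdeal_span_singleton, conjIdeal_toIdeal, star_intCast]
      using congrArg conjIdeal hz
  obtain ⟨v, hv, hw⟩ := exists_isUnit_star_mul_eq_self_or_neg hD4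
    (f.isInvertibleIdeal_toIdeal.mul_right_cancel (hz_conj.trans hz.symm))
  refine ⟨_, y.norm, mul_ne_zero hv.ne_zero (mul_ne_zero hx (star_ne_zero.mpr hy)), hw, ?_⟩
  rw [Ideal.span_singleton_mul_left_unit hv, hz]

lemma eq_or_eq_partner (hD4 : t ^ 2 + 4 * p ≠ -4) (h : f.toTwoTorsion = g.toTwoTorsion)
    {n : ℤ} {f' : AmbiguousForm (t ^ 2 + 4 * p)} (hn : n ≠ 0)
    (hf' : Ideal.span {sqrtDisc p t} * f.toIdeal =
      Ideal.span {(n : QuadraticAlgebra ℤ p t)} * f'.toIdeal) : g = f ∨ g = f' := by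
  obtain ⟨w, m, hw, hstar | hstar, hfg⟩ := exists_star_eq_self_or_neg hD4 h
  · left
    have hw_eq := eq_intCast_of_star_eq_self hstar
    rw [hw_eq] at hfg hw
    exact (eq_of_span_intCast_mul_toIdeal_eq (by exact_mod_cast hw) hfg).symm
  · right
    have hw_eq := two_mul_eq_of_star_eq_neg hstar
    have him : w.im ≠ 0 := by
      intro h0
      simp [h0, hw] at hw_eq
    have : Ideal.span {((w.im * n : ℤ) : QuadraticAlgebra ℤ p t)} * f'.toIdeal =
        Ideal.span {((2 * m : ℤ) : QuadraticAlgebra ℤ p t)} * g.toIdeal := by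
      rw [Int.cast_mul, Int.cast_mul, ← Ideal.span_singleton_mul_span_singleton,
        ← Ideal.span_singleton_mul_span_singleton, mul_assoc, mul_assoc, ← hf', ← hfg,
        ← mul_assoc, ← mul_assoc, Ideal.span_singleton_mul_span_singleton,
        Ideal.span_singleton_mul_span_singleton, ← hw_eq, Int.cast_ofNat]
    exact (eq_of_span_intCast_mul_toIdeal_eq (mul_ne_zero him hn) this).symm

lemma card_toTwoTorsion_fiber (hD4 : t ^ 2 + 4 * p ≠ -4)
    (c : {c : ClassGroup (QuadraticAlgebra ℤ p t) // c ^ 2 = 1}) :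
    Nat.card {f : AmbiguousForm (t ^ 2 + 4 * p) // f.toTwoTorsion = c} = 2 := by
  obtain ⟨f, rfl⟩ := toTwoTorsion_surjective c
  obtain ⟨n, f', hn, hf'⟩ := f.exists_partner
  have hff' : f'.toTwoTorsion = f.toTwoTorsion :=
    (toTwoTorsion_eq_iff.mpr ⟨_, _, sqrtDisc_ne_zero, by exact_mod_cast hn, hf'⟩).symm
  refine Nat.card_eq_two_iff.mpr ⟨⟨f, rfl⟩, ⟨f', hff'⟩, fun h => ?_, ?_⟩
  · obtain rfl : f = f' := congrArg Subtype.val h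
    exact span_sqrtDisc_ne_span_intCast hD4 n (f.isInvertibleIdeal_toIdeal.mul_right_cancel hf')
  · refine Set.eq_univ_of_forall fun ⟨g, hg⟩ => ?_
    simpa using eq_or_eq_partner hD4 hg.symm hn hf'

end AmbiguousForm

lemma card_eq_mul_of_card_fiber_eq {α β : Type*} {f : α → β} {n : ℕ} (hn : n ≠ 0)
    (hf : ∀ b, Nat.card {a // f a = b} = n) : Nat.card α = n * Nat.card β := by
  have e (b : β) : {a // f a = b} ≃ Fin n := by
    have := Nat.finite_of_card_ne_zero ((hf b).trans_ne hn)
    exact Finite.equivFinOfCardEq (hf b)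
  rw [Nat.card_congr ((Equiv.sigmaFiberEquiv f).symm.trans (Equiv.sigmaCongrRight e)),
    Nat.card_congr (Equiv.sigmaEquivProd β (Fin n)), Nat.card_prod, Nat.card_fin, mul_comm]

end TwoToOne

section Count

variable {p t : ℤ}

lemma isPrincipalIdealRing_of_disc_eq_neg_four (h : t ^ 2 + 4 * p = -4) :
    IsPrincipalIdealRing (QuadraticAlgebra ℤ p t) := by
  obtain ⟨n, rfl⟩ : Even t := by
    rw [← Int.even_pow' two_ne_zero, even_iff_two_dvd]
    exact ⟨-2 - 2 * p, by linarith⟩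
  obtain rfl : p = -1 - n ^ 2 := by linarith
  have hi : omegaAdd (-1 - n ^ 2) (n + n) (-n) * omegaAdd (-1 - n ^ 2) (n + n) (-n) =
      ((-1 : ℤ) : QuadraticAlgebra ℤ (-1 - n ^ 2) (n + n)) := by
    ext
    · simp only [QuadraticAlgebra.re_mul, QuadraticAlgebra.re_intCast, Int.cast_eq, re_omegaAdd,
        im_omegaAdd]
      ring
    · simp
  refine IsPrincipalIdealRing.of_surjective (Zsqrtd.lift ⟨_, hi⟩ : GaussianInt →+* _) fun z =>
    ⟨⟨z.re + n * z.im, z.im⟩, ?_⟩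
  ext <;> simp [mul_comm n]

variable [Fact (t ^ 2 + 4 * p < 0)]

theorem card_ambiguousForm_eq_two_mul_card_two_torsion :
    Nat.card (AmbiguousForm (t ^ 2 + 4 * p)) =
      2 * Nat.card {c : ClassGroup (QuadraticAlgebra ℤ p t) // c ^ 2 = 1} := by
  by_cases hD4 : t ^ 2 + 4 * p = -4
  · have := isPrincipalIdealRing_of_disc_eq_neg_four hD4
    have : Subsingleton (ClassGroup (QuadraticAlgebra ℤ p t)) :=
      Fintype.card_le_one_iff_subsingleton.mp card_classGroup_eq_one.le
    have : Nat.card {c : ClassGroup (QuadraticAlgebra ℤ p t) // c ^ 2 = 1} = 1 :=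
      Nat.card_eq_one_iff_unique.mpr ⟨inferInstance, ⟨1, one_pow 2⟩⟩
    rw [this, hD4, AmbiguousForm.card_eq_two_pow (by norm_num) (by norm_num)]
    have : Nat.primeFactors 4 = {2} := Nat.primeFactors_prime_pow two_ne_zero Nat.prime_two
    simp [numAssignedCharacters, this]
  · exact card_eq_mul_of_card_fiber_eq two_ne_zero (AmbiguousForm.card_toTwoTorsion_fiber hD4)

end Count

section QuadOrder

/-- The ring `R[x]/(x² - t x + m)` as a quadratic algebra, with `x` corresponding to `ω`. -/
noncomputable def adjoinRootEquivQuadraticAlgebra {R : Type*} [CommRing R] (t m : R) :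
    AdjoinRoot (X ^ 2 - C t * X + C m : R[X]) ≃ₐ[R] QuadraticAlgebra R (-m) t :=
  AlgEquiv.ofAlgHom
    (AdjoinRoot.liftAlgHom _ (Algebra.ofId R _) ω (by ext <;> simp [sq]))
    (QuadraticAlgebra.lift ⟨AdjoinRoot.root _, by
      have h := AdjoinRoot.eval₂_root (X ^ 2 - C t * X + C m : R[X])
      simp only [eval₂_add, eval₂_sub, eval₂_mul, eval₂_X_pow, eval₂_X, eval₂_C] at h
      rw [Algebra.smul_def, Algebra.smul_def, AdjoinRoot.algebraMap_eq, map_neg]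
      linear_combination h⟩)
    (QuadraticAlgebra.algHom_ext (by simp))
    (AdjoinRoot.algHom_ext (by simp))

/-- The order of discriminant `Δ` as a quadratic algebra over `ℤ`. -/
noncomputable def quadOrderEquiv (Δ : ℤ) :
    quadOrder Δ ≃+* QuadraticAlgebra ℤ (-((Δ ^ 2 - Δ) / 4)) Δ :=
  (adjoinRootEquivQuadraticAlgebra Δ ((Δ ^ 2 - Δ) / 4)).toRingEquiv

lemma sq_add_four_mul_neg_div_four {Δ : ℤ} (hΔ : Δ % 4 = 0 ∨ Δ % 4 = 1) :
    Δ ^ 2 + 4 * -((Δ ^ 2 - Δ) / 4) = Δ := by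
  have : 4 ∣ Δ ^ 2 - Δ := by
    rw [Int.dvd_iff_emod_eq_zero, Int.sub_emod, sq, Int.mul_emod]
    rcases hΔ with h | h <;> norm_num [h]
  omega

lemma card_pow_eq_one_congr {G H : Type*} [Monoid G] [Monoid H] (e : G ≃* H) (n : ℕ) :
    Nat.card {g : G // g ^ n = 1} = Nat.card {h : H // h ^ n = 1} :=
  Nat.card_congr (e.toEquiv.subtypeEquiv fun g => by simp [← map_pow])

end QuadOrder

/-- Let `Δ < 0` with `Δ ≡ 0` or `1 (mod 4)`, let `o(Δ)` be the imaginary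
quadratic order of discriminant `Δ` (an integral domain since `Δ < 0`), and let `r` be
the number of distinct odd primes dividing `Δ`. Then the number of `2`-torsion elements
of `Pic(o(Δ)) = ClassGroup o(Δ)` is `2^μ`, where `μ = r − 1` if `Δ ≡ 1 (mod 4)` or
`Δ ≡ 4 (mod 16)`; `μ = r` if `Δ ≡ 8, 12 (mod 16)` or `Δ ≡ 16 (mod 32)`; and
`μ = r + 1` if `Δ ≡ 0 (mod 32)`. -/
theorem card_classGroup_two_torsion (Δ : ℤ) (hΔneg : Δ < 0)
    (hΔcong : Δ % 4 = 0 ∨ Δ % 4 = 1) [IsDomain (quadOrder Δ)]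
    (r : ℕ) (hr : r = (Δ.natAbs.primeFactors.erase 2).card)
    (μ : ℕ)
    (hμ : μ = if Δ % 4 = 1 ∨ Δ % 16 = 4 then r - 1
          else if Δ % 16 = 8 ∨ Δ % 16 = 12 ∨ Δ % 32 = 16 then r
          else r + 1) :
    Nat.card {c : ClassGroup (quadOrder Δ) // c ^ 2 = 1} = 2 ^ μ := by
  have hdisc := sq_add_four_mul_neg_div_four hΔcong
  have : Fact (Δ ^ 2 + 4 * -((Δ ^ 2 - Δ) / 4) < 0) := ⟨hdisc.trans_lt hΔneg⟩
  have hcard : 2 * Nat.card {c : ClassGroup (quadOrder Δ) // c ^ 2 = 1} =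
      2 ^ numAssignedCharacters Δ := by
    rw [← AmbiguousForm.card_eq_two_pow hΔneg hΔcong,
      card_pow_eq_one_congr (ClassGroup.mulEquiv (quadOrderEquiv Δ)),
      ← card_ambiguousForm_eq_two_mul_card_two_torsion, hdisc]
  have hμ_succ : numAssignedCharacters Δ = μ + 1 := by
    have hne : numAssignedCharacters Δ ≠ 0 := fun h => by rw [h] at hcard; omega
    rw [numAssignedCharacters, ← hr] at *
    split_ifs at * <;> omega
  refine Nat.eq_of_mul_eq_mul_left two_pos ?_
  rw [hcard, hμ_succ, pow_succ']
end
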